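/- arXiv:1206.5069 — 4 statements merged into one kernel-verified Lean document; each statement's English description precedes it below -/
import Mathlib

section
/- Under hypothesis (1.0), if λ₀ > 0 and g is a non-zero a.e. eigenfunction of λ₀ (with Neumann boundary g'(0) = 0 and, when D < ∞, Dirichlet boundary g(D) = 0), then g' never vanishes on (0,D); in particular g is strictly monotone on [0,D). -/
/-!
On `[0, p]` with `p < D` the eigenvalue equation is the first-order system `g' = q`,
`(e^C q)' = -λ (e^C / a) g`, where `e^C q` is absolutely continuous (`isPrimitive_flux`).

Suppose `g'(x₀) = 0` with `0 < x₀ < D`. Since the flux `e^C g'` vanishes at `0` and at `x₀`,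
integrating the system gives `∫ g dμ = 0` and `∫ e^C g'² = λ ∫ g² dμ` over `(0, x₀)`
(`energy_identity`). Let `k` be `g - g(x₀)` on `[0, x₀]` and `0` afterwards. As `g'(x₀) = 0`, `k` is
`C¹`, and it is compactly supported in `[0, D)`, so it is admissible for `λ₀` without any
smoothing. Its Dirichlet form is `λ ∫ g² dμ`, while `μ(k²) = ∫ g² dμ + g(x₀)² μ(0, x₀)` because the
mean of `g` is zero. Hence `λ₀ = λ` forces `g(x₀) = 0` (`eq_zero_of_deriv_eq_zero`). But then both
Cauchy data of `g` vanish at `x₀`, and uniqueness for the linear system with integrable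
coefficients (`cauchy_unique`) gives `g = 0` on `[0, D)`, a contradiction.

So `g'` has no zero in `(0, D)`, has constant sign by Darboux's theorem, and `g` is strictly
monotone.
-/

open MeasureTheory Set Filter Topology ENNReal

noncomputable section

/-- The open interval `(0, D)` in `ℝ`, where `D : ℝ≥0∞` may be infinite. -/
def ooI (D : ℝ≥0∞) : Set ℝ := {x : ℝ | 0 < x ∧ ENNReal.ofReal x < D}

/-- The interval `[0, D)` in `ℝ`. -/
def coI (D : ℝ≥0∞) : Set ℝ := {x : ℝ | 0 ≤ x ∧ ENNReal.ofReal x < D}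

/-- The interval `[0, D]` in `ℝ` (conventionally `[0, ∞)` when `D = ∞`). -/
def ccI (D : ℝ≥0∞) : Set ℝ := {x : ℝ | 0 ≤ x ∧ ENNReal.ofReal x ≤ D}

/-- `C(x) = ∫_0^x b(u)/a(u) du`. -/
def Cf (a b : ℝ → ℝ) (x : ℝ) : ℝ := ∫ u in Set.Ioo 0 x, b u / a u

/-- The measure `μ(dx) = (e^{C(x)}/a(x)) dx` on `(0, D)`. -/
def muM (a b : ℝ → ℝ) (D : ℝ≥0∞) : Measure ℝ :=
  (volume.restrict (ooI D)).withDensity fun x => ENNReal.ofReal (Real.exp (Cf a b x) / a x)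

/-- The measure `ν(dx) = e^{-C(x)} dx` on `(0, D)`. -/
def nuM (a b : ℝ → ℝ) (D : ℝ≥0∞) : Measure ℝ :=
  (volume.restrict (ooI D)).withDensity fun x => ENNReal.ofReal (Real.exp (-Cf a b x))

/-- Hypothesis (1.0): `a`, `b` Borel measurable, `a > 0` on `(0,D)`, and `b/a`, `e^C/a`
locally integrable on `[0, D]`. -/
def Hyp (a b : ℝ → ℝ) (D : ℝ≥0∞) : Prop :=
  Measurable a ∧ Measurable b ∧ (∀ x ∈ ooI D, 0 < a x) ∧
    ∀ p : ℝ, 0 ≤ p → ENNReal.ofReal p ≤ D →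
      IntegrableOn (fun u => b u / a u) (Set.Icc 0 p) ∧
      IntegrableOn (fun u => Real.exp (Cf a b u) / a u) (Set.Icc 0 p)

/-- `f ∈ C¹(0,D) ∩ C[0,D]`. -/
def C1C (D : ℝ≥0∞) (f : ℝ → ℝ) : Prop :=
  ContinuousOn f (ccI D) ∧ (∀ x ∈ ooI D, DifferentiableAt ℝ f x) ∧
    ContinuousOn (deriv f) (ooI D)

/-- The Dirichlet form `D(f) = ∫_0^D e^{C} f'^2 dx`. -/
def Dform (a b : ℝ → ℝ) (D : ℝ≥0∞) (f : ℝ → ℝ) : ℝ≥0∞ :=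
  ∫⁻ x in ooI D, ENNReal.ofReal (Real.exp (Cf a b x) * deriv f x ^ 2)

/-- `μ(f²)`. -/
def muL2 (a b : ℝ → ℝ) (D : ℝ≥0∞) (f : ℝ → ℝ) : ℝ≥0∞ :=
  ∫⁻ x, ENNReal.ofReal (f x ^ 2) ∂(muM a b D)

/-- The ND (Neumann at `0`, Dirichlet at `D`) principal eigenvalue `λ₀`, defined with
compactly supported test functions. -/
def lam0 (a b : ℝ → ℝ) (D : ℝ≥0∞) : ℝ≥0∞ :=
  sInf {r | ∃ f : ℝ → ℝ, C1C D f ∧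
    (∃ p : ℝ, 0 ≤ p ∧ ENNReal.ofReal p < D ∧ ∀ x, p < x → f x = 0) ∧
    (D ≠ ∞ → f D.toReal = 0) ∧ muL2 a b D f = 1 ∧ r = Dform a b D f}

/-- `g` is an a.e. eigenfunction of `λ`: `g ∈ C¹` on `[0,D)` (with derivative `g'`),
`g'` is locally absolutely continuous (an indefinite integral of `g''`), and
`a g'' + b g' = -λ g` almost everywhere on `(0,D)`. -/
def AEEigenfunction (a b : ℝ → ℝ) (D : ℝ≥0∞) (lam : ℝ) (g g' g'' : ℝ → ℝ) : Prop :=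
  ContinuousOn g (coI D) ∧ ContinuousOn g' (coI D) ∧
  (∀ x ∈ ooI D, HasDerivAt g (g' x) x) ∧
  HasDerivWithinAt g (g' 0) (Set.Ici 0) 0 ∧
  (∀ p : ℝ, 0 ≤ p → ENNReal.ofReal p < D → IntegrableOn g'' (Set.Icc 0 p)) ∧
  (∀ x ∈ coI D, g' x = g' 0 + ∫ u in Set.Ioo 0 x, g'' u) ∧
  ∀ᵐ x ∂(volume.restrict (ooI D)), a x * g'' x + b x * g' x = -lam * g x

/-! ### Primitives of integrable functions -/

/-- `u` is, on `[0, p]`, an indefinite integral of the integrable function `φ`; that is, `u` is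
absolutely continuous there with almost everywhere derivative `φ`. -/
def IsPrimitive (u φ : ℝ → ℝ) (p : ℝ) : Prop :=
  IntervalIntegrable φ volume 0 p ∧ ∀ x ∈ Icc 0 p, u x = u 0 + ∫ t in (0 : ℝ)..x, φ t

namespace IsPrimitive

variable {u v φ ψ : ℝ → ℝ} {p : ℝ}

/-- An absolutely continuous function is a primitive of its almost everywhere derivative. -/
lemma of_ac {w : ℝ → ℝ} (hp : 0 ≤ p) (hw : AbsolutelyContinuousOnInterval w 0 p)
    (hd : ∀ᵐ x, x ∈ uIoc 0 p → HasDerivAt w (φ x) x) (hu : EqOn u w (Icc 0 p)) :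
    IsPrimitive u φ p := by
  have hd' : ∀ᵐ x, x ∈ uIoc 0 p → deriv w x = φ x := by
    filter_upwards [hd] with x hx hm using (hx hm).deriv
  refine ⟨hw.intervalIntegrable_deriv.congr_ae ?_, fun x hx => ?_⟩
  · rw [Filter.EventuallyEq, ae_restrict_iff' measurableSet_uIoc]
    exact hd'
  · have hsub : uIcc 0 x ⊆ uIcc 0 p := by
      rw [uIcc_of_le hx.1, uIcc_of_le hp]
      exact Icc_subset_Icc_right hx.2
    have h1 := (hw.mono hsub).integral_deriv_eq_sub
    have h2 : ∫ t in (0 : ℝ)..x, deriv w t = ∫ t in (0 : ℝ)..x, φ t := by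
      apply intervalIntegral.integral_congr_ae
      filter_upwards [hd'] with t ht hm
      refine ht ?_
      rw [uIoc_of_le hx.1] at hm
      rw [uIoc_of_le hp]
      exact Ioc_subset_Ioc_right hx.2 hm
    rw [hu hx, hu ⟨le_rfl, hp⟩, ← h2, h1]
    ring

/-- A primitive is the restriction to `[0, p]` of a function that is differentiable, in the
two-sided sense, at almost every point of `(0, p]`. -/
lemma exists_ac (h : IsPrimitive u φ p) :
    ∃ w, AbsolutelyContinuousOnInterval w 0 p ∧
      (∀ᵐ x, x ∈ uIoc 0 p → HasDerivAt w (φ x) x) ∧ EqOn u w (Icc 0 p) := by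
  refine ⟨fun x => u 0 + ∫ t in (0 : ℝ)..x, φ t, ?_, ?_, h.2⟩
  · have hc : AbsolutelyContinuousOnInterval (fun _ : ℝ => u 0) 0 p :=
      ContDiffOn.absolutelyContinuousOnInterval contDiffOn_const
    exact hc.add (h.1.absolutelyContinuousOnInterval_intervalIntegral left_mem_uIcc)
  · filter_upwards [h.1.ae_hasDerivAt_integral] with x hx hm
    exact (hx (uIoc_subset_uIcc hm) 0 left_mem_uIcc).const_add _

lemma continuousOn (hp : 0 ≤ p) (h : IsPrimitive u φ p) : ContinuousOn u (Icc 0 p) := by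
  obtain ⟨w, hw, -, he⟩ := h.exists_ac
  have := hw.continuousOn
  rw [uIcc_of_le hp] at this
  exact this.congr he

lemma mul (hp : 0 ≤ p) (hu : IsPrimitive u φ p) (hv : IsPrimitive v ψ p) :
    IsPrimitive (fun x => u x * v x) (fun x => φ x * v x + u x * ψ x) p := by
  obtain ⟨w, hw, hwd, hwe⟩ := hu.exists_ac
  obtain ⟨z, hz, hzd, hze⟩ := hv.exists_ac
  refine of_ac hp (hw.mul hz) ?_ fun x hx => by simp [hwe hx, hze hx]
  filter_upwards [hwd, hzd] with x h1 h2 hm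
  have hx : x ∈ Icc 0 p := by
    rw [uIoc_of_le hp] at hm
    exact Ioc_subset_Icc_self hm
  rw [hwe hx, hze hx]
  exact (h1 hm).mul (h2 hm)

lemma exp (hp : 0 ≤ p) (hu : IsPrimitive u φ p) :
    IsPrimitive (fun x => Real.exp (u x)) (fun x => Real.exp (u x) * φ x) p := by
  obtain ⟨w, hw, hwd, hwe⟩ := hu.exists_ac
  refine of_ac (w := fun x => Real.exp (w x)) hp ?_ ?_ fun x hx => by simp [hwe hx]
  · obtain ⟨M, hM⟩ := hw.exists_bound
    -- `exp` is Lipschitz on the bounded range of `w`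
    obtain ⟨K, hK⟩ := (Real.contDiff_exp (n := 1)).contDiffOn.exists_lipschitzOnWith
      (s := Icc (-M) M) (by decide) (convex_Icc _ _) isCompact_Icc
    rw [absolutelyContinuousOnInterval_iff] at hw ⊢
    intro ε hε
    obtain ⟨δ, hδ, H⟩ := hw (ε / (K + 1)) (by positivity)
    refine ⟨δ, hδ, fun E hE hs => ?_⟩
    have h1 := H E hE hs
    calc ∑ i ∈ Finset.range E.1, dist (Real.exp (w (E.2 i).1)) (Real.exp (w (E.2 i).2))
        ≤ ∑ i ∈ Finset.range E.1, K * dist (w (E.2 i).1) (w (E.2 i).2) := by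
          refine Finset.sum_le_sum fun i hi => ?_
          have hm := hE.1 i hi
          exact hK.dist_le_mul _ (abs_le.1 (hM _ hm.1)) _ (abs_le.1 (hM _ hm.2))
      _ = K * ∑ i ∈ Finset.range E.1, dist (w (E.2 i).1) (w (E.2 i).2) := by
          rw [Finset.mul_sum]
      _ ≤ (K + 1) * ∑ i ∈ Finset.range E.1, dist (w (E.2 i).1) (w (E.2 i).2) := by
          gcongr
          linarith
      _ < (K + 1) * (ε / (K + 1)) := by gcongr
      _ = ε := by field_simp
  · filter_upwards [hwd] with x h1 hm
    have hx : x ∈ Icc 0 p := by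
      rw [uIoc_of_le hp] at hm
      exact Ioc_subset_Icc_self hm
    rw [hwe hx]
    exact (h1 hm).exp

lemma congr_ae (hu : IsPrimitive u φ p) (hp : 0 ≤ p) (h : ∀ᵐ x, x ∈ Ioc 0 p → φ x = ψ x) :
    IsPrimitive u ψ p := by
  obtain ⟨w, hw, hwd, hwe⟩ := hu.exists_ac
  refine of_ac hp hw ?_ hwe
  filter_upwards [hwd, h] with x h1 h2 hm
  rw [← h2 (by rwa [uIoc_of_le hp] at hm)]
  exact h1 hm

lemma sub_eq (hu : IsPrimitive u φ p) {x y : ℝ} (hx : x ∈ Icc 0 p) (hy : y ∈ Icc 0 p) :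
    u y - u x = ∫ t in x..y, φ t := by
  have hp : 0 ≤ p := hx.1.trans hx.2
  have key : ∀ z ∈ Icc 0 p, IntervalIntegrable φ volume 0 z := fun z hz =>
    hu.1.mono_set (by rw [uIcc_of_le hz.1, uIcc_of_le hp]; exact Icc_subset_Icc_right hz.2)
  rw [hu.2 x hx, hu.2 y hy, ← intervalIntegral.integral_interval_sub_left (key y hy) (key x hx)]
  ring

lemma of_hasDerivAt (hp : 0 ≤ p) (hu : ContinuousOn u (Icc 0 p)) (hφ : ContinuousOn φ (Icc 0 p))
    (hd : ∀ x ∈ Ioo 0 p, HasDerivAt u (φ x) x) : IsPrimitive u φ p := by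
  refine ⟨(hφ.mono (by rw [uIcc_of_le hp])).intervalIntegrable, fun x hx => ?_⟩
  have hs : Icc 0 x ⊆ Icc 0 p := Icc_subset_Icc_right hx.2
  rw [intervalIntegral.integral_eq_sub_of_hasDerivAt_of_le hx.1 (hu.mono hs)
    (fun t ht => hd t ⟨ht.1, ht.2.trans_le hx.2⟩)
    ((hφ.mono (by rwa [uIcc_of_le hx.1])).intervalIntegrable)]
  ring

end IsPrimitive

/-! ### Uniqueness for the Cauchy problem and the energy identity -/

/-- One step of uniqueness for the system `g' = q`, `(E q)' = -λ r g` with integrable `r`: on an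
interval short enough that the Volterra operator is a contraction, vanishing Cauchy data at one
point force vanishing Cauchy data at the other. -/
lemma cauchy_step {g q E r : ℝ → ℝ} {p lam : ℝ} (hp : 0 ≤ p)
    (hE : ContinuousOn E (Icc 0 p)) (hE0 : ∀ x, 0 < E x)
    (hg : IsPrimitive g q p) (hr : IntervalIntegrable r volume 0 p)
    (hP : IsPrimitive (fun x => E x * q x) (fun x => -lam * r x * g x) p) :
    ∃ δ > 0, ∀ x ∈ Icc 0 p, ∀ y ∈ Icc 0 p, |y - x| ≤ δ → g x = 0 → q x = 0 →
      g y = 0 ∧ q y = 0 := by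
  obtain ⟨B, hB⟩ := isCompact_Icc.exists_bound_of_continuousOn (hE.inv₀ fun x _ => (hE0 x).ne')
  have hB0 : 0 ≤ B := (norm_nonneg _).trans (hB 0 ⟨le_rfl, hp⟩)
  set R := ∫ t in (0 : ℝ)..p, |r t| with hR
  have hR0 : 0 ≤ R := intervalIntegral.integral_nonneg hp fun _ _ => abs_nonneg _
  set K := B * (|lam| * R) with hK
  have hK0 : 0 ≤ K := by positivity
  refine ⟨1 / (K + 1), by positivity, fun x hx y hy hxy hgx hqx => ?_⟩
  have hJ : uIcc x y ⊆ Icc 0 p := uIcc_subset_Icc hx hy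
  obtain ⟨z, hz, hmax⟩ := (isCompact_uIcc (a := x) (b := y)).exists_isMaxOn nonempty_uIcc
    (((hg.continuousOn hp).mono hJ).abs)
  set M := |g z| with hM
  have hmax' : ∀ t ∈ uIcc x y, |g t| ≤ M := fun t ht => hmax ht
  have hri : IntervalIntegrable (fun t => |r t|) volume 0 p := hr.abs
  have hq : ∀ t ∈ uIcc x y, |q t| ≤ K * M := by
    intro t ht
    have ht' := hJ ht
    have h1 := hP.sub_eq hx ht'
    rw [hqx, mul_zero, sub_zero] at h1
    have hsub : uIoc x t ⊆ Ioc 0 p := by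
      intro s hs
      rcases le_total x t with h | h
      · rw [uIoc_of_le h] at hs
        exact ⟨hx.1.trans_lt hs.1, hs.2.trans ht'.2⟩
      · rw [uIoc_of_ge h] at hs
        exact ⟨ht'.1.trans_lt hs.1, hs.2.trans hx.2⟩
    have hrI : IntegrableOn (fun t => |r t|) (Ioc 0 p) :=
      (intervalIntegrable_iff_integrableOn_Ioc_of_le hp).1 hri
    have h2 : |∫ s in x..t, -lam * r s * g s| ≤ |lam| * R * M := by
      calc |∫ s in x..t, -lam * r s * g s|
          ≤ ∫ s in uIoc x t, ‖-lam * r s * g s‖ := by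
            rw [← Real.norm_eq_abs]
            exact intervalIntegral.norm_integral_le_integral_norm_uIoc
        _ ≤ ∫ s in uIoc x t, |lam| * M * |r s| := by
            refine integral_mono_of_nonneg (ae_of_all _ fun _ => norm_nonneg _)
              ((hrI.mono_set hsub).const_mul _) ?_
            rw [Filter.EventuallyLE, ae_restrict_iff' measurableSet_uIoc]
            refine ae_of_all _ fun s hs => ?_
            have hsm : s ∈ uIcc x y := uIcc_subset_uIcc_left ht (uIoc_subset_uIcc hs)
            simp only [norm_mul, norm_neg, Real.norm_eq_abs]
            have := hmax' s hsm
            calc |lam| * |r s| * |g s| ≤ |lam| * |r s| * M := by gcongr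
              _ = |lam| * M * |r s| := by ring
        _ = |lam| * M * ∫ s in uIoc x t, |r s| := integral_const_mul _ _
        _ ≤ |lam| * M * R := by
            rw [hR, intervalIntegral.integral_of_le hp]
            exact mul_le_mul_of_nonneg_left (setIntegral_mono_set hrI
              (ae_of_all _ fun _ => abs_nonneg _) (LE.le.eventuallyLE hsub)) (by positivity)
        _ = |lam| * R * M := by ring
    rw [← h1] at h2
    have h3 : q t = (E t)⁻¹ * (E t * q t) := by
      have := (hE0 t).ne'
      field_simp
    have h4 : |(E t)⁻¹| ≤ B := hB t ht'
    rw [h3, abs_mul]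
    calc |(E t)⁻¹| * |E t * q t| ≤ B * (|lam| * R * M) := by gcongr
      _ = K * M := by rw [hK]; ring
  have hM0 : M = 0 := by
    have h1 := hg.sub_eq hx (hJ hz)
    rw [hgx, sub_zero] at h1
    have h2 : ‖∫ t in x..z, q t‖ ≤ K * M * |z - x| :=
      intervalIntegral.norm_integral_le_of_norm_le_const fun t ht =>
        hq t (uIcc_subset_uIcc_left hz (uIoc_subset_uIcc ht))
    rw [← h1, Real.norm_eq_abs, ← hM] at h2
    have h3 : |z - x| ≤ 1 / (K + 1) := (abs_sub_left_of_mem_uIcc hz).trans hxy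
    have hM' : 0 ≤ M := abs_nonneg _
    have h4 : M ≤ K * M * (1 / (K + 1)) := h2.trans (by gcongr)
    have h5 : K * M * (1 / (K + 1)) = M - M / (K + 1) := by field_simp; ring
    have h6 : M / (K + 1) ≤ 0 := by linarith
    have h7 : M ≤ 0 := by
      by_contra! hc
      exact absurd h6 (not_le.2 (by positivity))
    exact le_antisymm h7 hM'
  have hy' : y ∈ uIcc x y := right_mem_uIcc
  have h1 := hmax' y hy'
  have h2 := hq y hy'
  rw [hM0, mul_zero] at h2
  rw [hM0] at h1
  exact ⟨abs_nonpos_iff.1 h1, abs_nonpos_iff.1 h2⟩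

/-- Uniqueness for the Cauchy problem: the set where the Cauchy data vanish is closed under steps
of a fixed length, hence all of `[0, p]` by connectedness. -/
lemma cauchy_unique {g q E r : ℝ → ℝ} {p lam : ℝ} (hp : 0 ≤ p)
    (hE : ContinuousOn E (Icc 0 p)) (hE0 : ∀ x, 0 < E x)
    (hg : IsPrimitive g q p) (hr : IntervalIntegrable r volume 0 p)
    (hP : IsPrimitive (fun x => E x * q x) (fun x => -lam * r x * g x) p)
    {x : ℝ} (hx : x ∈ Icc 0 p) (hgx : g x = 0) (hqx : q x = 0) :
    ∀ y ∈ Icc 0 p, g y = 0 := by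
  obtain ⟨δ, hδ, H⟩ := cauchy_step hp hE hE0 hg hr hP
  intro y hy
  have := (isPreconnected_Icc (a := (0 : ℝ)) (b := p)).induction₂
    (fun s t => (g s = 0 ∧ q s = 0) ↔ (g t = 0 ∧ q t = 0)) ?_
    (fun a b c _ _ _ h1 h2 => h1.trans h2) (fun a b _ _ h => h.symm) hx hy
  · exact (this.1 ⟨hgx, hqx⟩).1
  · intro s hs
    filter_upwards [self_mem_nhdsWithin, nhdsWithin_le_nhds (Metric.closedBall_mem_nhds s hδ)]
      with t ht hts
    rw [Metric.mem_closedBall, Real.dist_eq] at hts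
    exact ⟨fun h => H s hs t ht hts h.1 h.2,
      fun h => H t ht s hs (by rwa [abs_sub_comm]) h.1 h.2⟩

/-- The energy identity on `[0, p]` when the flux `E q` vanishes at both ends, together with the
vanishing of the mean of `g` against the weight `r`. -/
lemma energy_identity {g q E r : ℝ → ℝ} {p lam : ℝ} (hp : 0 ≤ p) (hlam : lam ≠ 0)
    (hE : ContinuousOn E (Icc 0 p))
    (hg : IsPrimitive g q p) (hq : ContinuousOn q (Icc 0 p))
    (hr : IntervalIntegrable r volume 0 p)
    (hP : IsPrimitive (fun x => E x * q x) (fun x => -lam * r x * g x) p)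
    (h0 : q 0 = 0) (h1 : q p = 0) :
    (∫ t in (0 : ℝ)..p, r t * g t = 0) ∧
      ∫ t in (0 : ℝ)..p, E t * q t ^ 2 = lam * ∫ t in (0 : ℝ)..p, r t * g t ^ 2 := by
  have hpp : p ∈ Icc 0 p := ⟨hp, le_rfl⟩
  have hgc : ContinuousOn g (uIcc 0 p) := by
    rw [uIcc_of_le hp]
    exact hg.continuousOn hp
  constructor
  · have := hP.2 p hpp
    simp only [h0, h1, mul_zero, zero_add, mul_assoc] at this
    rw [intervalIntegral.integral_const_mul] at this
    simpa [hlam] using this.symm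
  · have h := (hP.mul hp hg).2 p hpp
    simp only [h0, h1, mul_zero, zero_mul, zero_add] at h
    have e : ∀ t, -lam * r t * g t * g t + E t * q t * q t
        = E t * q t ^ 2 - lam * (r t * g t ^ 2) := fun t => by ring
    simp only [e] at h
    rw [intervalIntegral.integral_sub, intervalIntegral.integral_const_mul] at h
    · linarith
    · refine ContinuousOn.intervalIntegrable ?_
      rw [uIcc_of_le hp]
      exact hE.mul (hq.pow 2)
    · exact (hr.mul_continuousOn (hgc.pow 2)).const_mul _

/-! ### The eigenvalue equation on `[0, p]`, `p < D` -/

lemma mem_ooI_of_le {D : ℝ≥0∞} {p x : ℝ} (hpD : ENNReal.ofReal p < D) (hx : 0 < x) (hxp : x ≤ p) :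
    x ∈ ooI D :=
  ⟨hx, (ENNReal.ofReal_le_ofReal hxp).trans_lt hpD⟩

lemma mem_coI_of_le {D : ℝ≥0∞} {p x : ℝ} (hpD : ENNReal.ofReal p < D) (hx : 0 ≤ x) (hxp : x ≤ p) :
    x ∈ coI D :=
  ⟨hx, (ENNReal.ofReal_le_ofReal hxp).trans_lt hpD⟩

lemma measurableSet_ooI (D : ℝ≥0∞) : MeasurableSet (ooI D) :=
  measurableSet_Ioi.inter (ENNReal.measurable_ofReal measurableSet_Iio)

lemma convex_ooI (D : ℝ≥0∞) : Convex ℝ (ooI D) :=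
  Set.OrdConnected.convex ⟨fun _ hx _ hy _ hz => mem_ooI_of_le hy.2 (hx.1.trans_le hz.1) hz.2⟩

lemma convex_coI (D : ℝ≥0∞) : Convex ℝ (coI D) :=
  Set.OrdConnected.convex ⟨fun _ hx _ hy _ hz => mem_coI_of_le hy.2 (hx.1.trans hz.1) hz.2⟩

/-- `C` is Borel measurable on the whole line, also beyond `D`, where the defining integral may
take a junk value. -/
lemma measurable_Cf {a b : ℝ → ℝ} (ha : Measurable a) (hb : Measurable b) :
    Measurable (Cf a b) := by
  have hs : MeasurableSet {z : ℝ × ℝ | 0 < z.2 ∧ z.2 < z.1} :=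
    (measurableSet_lt measurable_const measurable_snd).inter
      (measurableSet_lt measurable_snd measurable_fst)
  have hm : Measurable ({z : ℝ × ℝ | 0 < z.2 ∧ z.2 < z.1}.indicator
      fun z => b z.2 / a z.2) :=
    ((hb.comp measurable_snd).div (ha.comp measurable_snd)).indicator hs
  have h := (hm.stronglyMeasurable.integral_prod_right' (ν := volume)).measurable
  convert h using 1
  funext x
  rw [Cf, ← integral_indicator measurableSet_Ioo]
  rfl

section Eigen

variable {a b : ℝ → ℝ} {D : ℝ≥0∞} {lam : ℝ} {g g' g'' : ℝ → ℝ} {p : ℝ}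

lemma isPrimitive_Cf (hyp : Hyp a b D) (hp : 0 ≤ p) (hpD : ENNReal.ofReal p < D) :
    IsPrimitive (Cf a b) (fun u => b u / a u) p := by
  refine ⟨?_, fun x hx => ?_⟩
  · rw [intervalIntegrable_iff_integrableOn_Icc_of_le hp]
    exact (hyp.2.2.2 p hp hpD.le).1
  · rw [intervalIntegral.integral_of_le hx.1, integral_Ioc_eq_integral_Ioo]
    simp [Cf]

lemma continuousOn_exp_Cf (hyp : Hyp a b D) (hp : 0 ≤ p) (hpD : ENNReal.ofReal p < D) :
    ContinuousOn (fun x => Real.exp (Cf a b x)) (Icc 0 p) :=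
  ((isPrimitive_Cf hyp hp hpD).continuousOn hp).rexp

lemma intervalIntegrable_weight (hyp : Hyp a b D) (hp : 0 ≤ p) (hpD : ENNReal.ofReal p < D) :
    IntervalIntegrable (fun u => Real.exp (Cf a b u) / a u) volume 0 p := by
  rw [intervalIntegrable_iff_integrableOn_Icc_of_le hp]
  exact (hyp.2.2.2 p hp hpD.le).2

lemma isPrimitive_g (heig : AEEigenfunction a b D lam g g' g'') (hp : 0 ≤ p)
    (hpD : ENNReal.ofReal p < D) : IsPrimitive g g' p :=
  .of_hasDerivAt hp (heig.1.mono fun _ hx => mem_coI_of_le hpD hx.1 hx.2)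
    (heig.2.1.mono fun _ hx => mem_coI_of_le hpD hx.1 hx.2)
    fun x hx => heig.2.2.1 x (mem_ooI_of_le hpD hx.1 hx.2.le)

/-- The self-adjoint form `(e^C g')' = -λ (e^C / a) g` of the eigenvalue equation. -/
lemma isPrimitive_flux (hyp : Hyp a b D) (heig : AEEigenfunction a b D lam g g' g'')
    (hp : 0 ≤ p) (hpD : ENNReal.ofReal p < D) :
    IsPrimitive (fun x => Real.exp (Cf a b x) * g' x)
      (fun x => -lam * (Real.exp (Cf a b x) / a x) * g x) p := by
  have hg' : IsPrimitive g' g'' p := by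
    refine ⟨?_, fun x hx => ?_⟩
    · rw [intervalIntegrable_iff_integrableOn_Icc_of_le hp]
      exact heig.2.2.2.2.1 p hp hpD
    · rw [intervalIntegral.integral_of_le hx.1, integral_Ioc_eq_integral_Ioo]
      exact heig.2.2.2.2.2.1 x (mem_coI_of_le hpD hx.1 hx.2)
  refine (((isPrimitive_Cf hyp hp hpD).exp hp).mul hp hg').congr_ae hp ?_
  have h := heig.2.2.2.2.2.2
  rw [ae_restrict_iff' (measurableSet_ooI D)] at h
  filter_upwards [h] with x hx hm
  have hxD := mem_ooI_of_le hpD hm.1 hm.2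
  have ha := hyp.2.2.1 x hxD
  have h2 := hx hxD
  field_simp
  linear_combination h2

/-! ### The test function at a critical point -/

/-- Integrals over `(0, D)` of functions supported in `(0, x₀]`, `x₀ < D`. -/
lemma lintegral_ooI {x₀ : ℝ} (hx₀ : x₀ ∈ ooI D) {h : ℝ → ℝ} (hz : ∀ x, x₀ < x → h x = 0)
    (hi : IntervalIntegrable h volume 0 x₀) (hn : ∀ x ∈ Ioc 0 x₀, 0 ≤ h x) :
    ∫⁻ x in ooI D, ENNReal.ofReal (h x) = ENNReal.ofReal (∫ x in (0 : ℝ)..x₀, h x) := by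
  rw [intervalIntegral.integral_of_le hx₀.1.le, ofReal_integral_eq_lintegral_ofReal
    ((intervalIntegrable_iff_integrableOn_Ioc_of_le hx₀.1.le).1 hi)
    ((ae_restrict_iff' measurableSet_Ioc).2 (ae_of_all _ hn)),
    ← lintegral_indicator (measurableSet_ooI D), ← lintegral_indicator measurableSet_Ioc]
  congr 1
  funext x
  by_cases h1 : x ∈ Ioc 0 x₀
  · rw [indicator_of_mem h1, indicator_of_mem (mem_ooI_of_le hx₀.2 h1.1 h1.2)]
  · rw [indicator_of_notMem h1]
    by_cases h2 : x ∈ ooI D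
    · rw [indicator_of_mem h2, hz x (not_le.1 fun h3 => h1 ⟨h2.1, h3⟩), ENNReal.ofReal_zero]
    · rw [indicator_of_notMem h2]

/-- Freezing `g` at a critical point `x₀` keeps it differentiable. -/
lemma hasDerivAt_min (heig : AEEigenfunction a b D lam g g' g'') {x₀ : ℝ} (hx₀ : x₀ ∈ ooI D)
    (hc : g' x₀ = 0) {x : ℝ} (hx : x ∈ ooI D) :
    HasDerivAt (fun y => g (min y x₀)) (g' (min x x₀)) x := by
  rcases lt_trichotomy x x₀ with h | rfl | h
  · rw [min_eq_left h.le]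
    refine (heig.2.2.1 x hx).congr_of_eventuallyEq ?_
    filter_upwards [Iio_mem_nhds h] with y hy
    rw [min_eq_left (le_of_lt hy)]
  · rw [min_self, hc]
    have h1 := heig.2.2.1 x hx
    rw [hc] at h1
    rw [← hasDerivWithinAt_univ, ← Iic_union_Ici (a := x)]
    refine HasDerivWithinAt.union ?_ ?_
    · exact h1.hasDerivWithinAt.congr (fun y hy => by rw [min_eq_left hy]) (by rw [min_self])
    · exact (hasDerivWithinAt_const x _ (g x)).congr (fun y hy => by rw [min_eq_right hy])
        (by rw [min_self])
  · rw [min_eq_right h.le, hc]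
    refine (hasDerivAt_const x (g x₀)).congr_of_eventuallyEq ?_
    filter_upwards [Ioi_mem_nhds h] with y hy
    rw [min_eq_right (le_of_lt hy)]

/-- At an interior critical point `x₀` the eigenfunction vanishes: otherwise `g - g(x₀)`, cut off
to `0` after `x₀`, is an admissible function with Rayleigh quotient
`λ μ(g²) / (μ(g²) + g(x₀)² μ(0, x₀)) < λ`, all integrals being over `(0, x₀)`. -/
lemma eq_zero_of_deriv_eq_zero (hyp : Hyp a b D) (hlam : ENNReal.ofReal lam = lam0 a b D)
    (hpos : 0 < lam) (heig : AEEigenfunction a b D lam g g' g'') (hNeumann : g' 0 = 0)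
    {x₀ : ℝ} (hx₀ : x₀ ∈ ooI D) (hc : g' x₀ = 0) : g x₀ = 0 := by
  by_contra hg0
  have hp : 0 ≤ x₀ := hx₀.1.le
  have hpD := hx₀.2
  set E : ℝ → ℝ := fun x => Real.exp (Cf a b x) with hEdef
  set r : ℝ → ℝ := fun x => Real.exp (Cf a b x) / a x with hrdef
  have hE : ContinuousOn E (Icc 0 x₀) := continuousOn_exp_Cf hyp hp hpD
  have hr : IntervalIntegrable r volume 0 x₀ := intervalIntegrable_weight hyp hp hpD
  have hg := isPrimitive_g heig hp hpD
  have hg'c : ContinuousOn g' (Icc 0 x₀) :=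
    heig.2.1.mono fun _ hx => mem_coI_of_le hpD hx.1 hx.2
  have hgc : ContinuousOn g (uIcc 0 x₀) := by
    rw [uIcc_of_le hp]
    exact hg.continuousOn hp
  have hrpos : ∀ x ∈ Ioc 0 x₀, 0 < r x := fun x hx =>
    div_pos (Real.exp_pos _) (hyp.2.2.1 x (mem_ooI_of_le hpD hx.1 hx.2))
  obtain ⟨hmean, henergy⟩ := energy_identity hp hpos.ne' hE hg hg'c hr
    (isPrimitive_flux hyp heig hp hpD) hNeumann hc
  set c := g x₀ with hcdef
  set G := ∫ t in (0 : ℝ)..x₀, r t * g t ^ 2 with hG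
  set m := ∫ t in (0 : ℝ)..x₀, r t with hm
  have hG0 : 0 ≤ G := by
    rw [hG, intervalIntegral.integral_of_le hp]
    exact setIntegral_nonneg measurableSet_Ioc fun x hx =>
      mul_nonneg (hrpos x hx).le (sq_nonneg _)
  have hm0 : 0 < m := intervalIntegral.intervalIntegral_pos_of_pos_on hr
    (fun x hx => hrpos x (Ioo_subset_Ioc_self hx)) hx₀.1
  have hA : ∫ t in (0 : ℝ)..x₀, r t * (g t - c) ^ 2 = G + c ^ 2 * m := by
    have e : ∀ t, r t * (g t - c) ^ 2 = r t * g t ^ 2 - 2 * c * (r t * g t) + c ^ 2 * r t :=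
      fun t => by ring
    simp only [e]
    have i1 : IntervalIntegrable (fun t => r t * g t ^ 2) volume 0 x₀ :=
      hr.mul_continuousOn (hgc.pow 2)
    have i2 : IntervalIntegrable (fun t => 2 * c * (r t * g t)) volume 0 x₀ :=
      (hr.mul_continuousOn hgc).const_mul _
    rw [intervalIntegral.integral_add (i1.sub i2) (hr.const_mul _),
      intervalIntegral.integral_sub i1 i2, intervalIntegral.integral_const_mul,
      intervalIntegral.integral_const_mul, hmean]
    ring
  set A := G + c ^ 2 * m with hAdef
  have hA0 : 0 < A := by positivity
  set s := 1 / Real.sqrt A with hs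
  have hs2 : s ^ 2 = 1 / A := by rw [hs, div_pow, Real.sq_sqrt hA0.le, one_pow]
  set f : ℝ → ℝ := fun x => s * (g (min x x₀) - c) with hf
  have hmin : ∀ x, 0 ≤ x → min x x₀ ∈ coI D := fun x hx =>
    mem_coI_of_le hpD (le_min hx hp) (min_le_right _ _)
  have hder : ∀ x ∈ ooI D, HasDerivAt f (s * g' (min x x₀)) x := fun x hx =>
    ((hasDerivAt_min heig hx₀ hc hx).sub_const c).const_mul s
  have hfz : ∀ x, x₀ < x → f x = 0 := fun x hx => by simp [hf, min_eq_right hx.le, hcdef]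
  have hC1 : C1C D f := by
    refine ⟨?_, fun x hx => (hder x hx).differentiableAt, ?_⟩
    · refine continuousOn_const.mul (ContinuousOn.sub ?_ continuousOn_const)
      exact heig.1.comp (by fun_prop) fun x hx => hmin x hx.1
    · refine ContinuousOn.congr (f := fun x => s * g' (min x x₀)) ?_ fun x hx => (hder x hx).deriv
      refine continuousOn_const.mul ?_
      exact heig.2.1.comp (by fun_prop) fun x hx => hmin x hx.1.le
  have hL2 : muL2 a b D f = 1 := by
    have hmeas : Measurable fun x => ENNReal.ofReal (r x) :=
      ((measurable_Cf hyp.1 hyp.2.1).exp.div hyp.1).ennreal_ofReal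
    rw [muL2, muM, lintegral_withDensity_eq_lintegral_mul_non_measurable _ hmeas
      (ae_of_all _ fun _ => ENNReal.ofReal_lt_top)]
    have e1 : ∫⁻ x in ooI D, ((fun x => ENNReal.ofReal (r x)) *
          fun x => ENNReal.ofReal (f x ^ 2)) x
        = ∫⁻ x in ooI D, ENNReal.ofReal (r x * f x ^ 2) := by
      refine setLIntegral_congr_fun (measurableSet_ooI D) fun x hx => ?_
      have : 0 ≤ r x := (div_pos (Real.exp_pos _) (hyp.2.2.1 x hx)).le
      rw [Pi.mul_apply, ENNReal.ofReal_mul this]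
    have e2 : EqOn (fun x => r x * f x ^ 2) (fun x => s ^ 2 * (r x * (g x - c) ^ 2))
        (uIcc 0 x₀) := by
      intro x hx
      rw [uIcc_of_le hp] at hx
      simp only [hf, min_eq_left hx.2]
      ring
    rw [e1, lintegral_ooI hx₀ (fun x hx => by rw [hfz x hx]; ring) ?_
      fun x hx => mul_nonneg (hrpos x hx).le (sq_nonneg _)]
    · rw [intervalIntegral.integral_congr e2, intervalIntegral.integral_const_mul, hA, hs2,
        one_div_mul_cancel hA0.ne', ENNReal.ofReal_one]
    · refine hr.mul_continuousOn (ContinuousOn.pow ?_ 2)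
      refine hC1.1.mono fun x hx => ?_
      rw [uIcc_of_le hp] at hx
      exact ⟨hx.1, (mem_coI_of_le hpD hx.1 hx.2).2.le⟩
  have hDf : Dform a b D f = ENNReal.ofReal (s ^ 2 * (lam * G)) := by
    have e1 : Dform a b D f
        = ∫⁻ x in ooI D, ENNReal.ofReal (E x * (s * g' (min x x₀)) ^ 2) :=
      setLIntegral_congr_fun (measurableSet_ooI D) fun x hx => by
        simp only [(hder x hx).deriv, hEdef]
    have e2 : EqOn (fun x => E x * (s * g' (min x x₀)) ^ 2) (fun x => s ^ 2 * (E x * g' x ^ 2))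
        (uIcc 0 x₀) := by
      intro x hx
      rw [uIcc_of_le hp] at hx
      simp only [min_eq_left hx.2]
      ring
    rw [e1, lintegral_ooI hx₀ (fun x hx => by rw [min_eq_right hx.le, hc]; ring) ?_
      fun x hx => mul_nonneg (Real.exp_pos _).le (sq_nonneg _)]
    · rw [intervalIntegral.integral_congr e2, intervalIntegral.integral_const_mul, henergy]
    · refine ContinuousOn.intervalIntegrable (ContinuousOn.congr ?_ e2)
      rw [uIcc_of_le hp]
      exact continuousOn_const.mul (hE.mul (hg'c.pow 2))
  have hle : lam0 a b D ≤ Dform a b D f :=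
    sInf_le ⟨f, hC1, ⟨x₀, hp, hpD, hfz⟩,
      fun hDt => hfz _ ((ENNReal.ofReal_lt_iff_lt_toReal hp hDt).1 hpD), hL2, rfl⟩
  rw [← hlam, hDf, ENNReal.ofReal_le_ofReal_iff (by positivity), hs2] at hle
  have h1 : lam * A ≤ lam * G := by
    have := mul_le_mul_of_nonneg_right hle hA0.le
    rwa [mul_comm (1 / A), mul_assoc, one_div_mul_cancel hA0.ne', mul_one] at this
  have h2 : 0 < c ^ 2 * m := by positivity
  have h3 := le_of_mul_le_mul_left h1 hpos
  linarith

end Eigen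

/-- Lemma 3.4: when `λ₀ > 0`, any non-zero a.e. eigenfunction of `λ₀` (with Neumann
boundary at `0` and Dirichlet boundary at `D` when `D < ∞`) has nowhere-vanishing
derivative on `(0,D)`; in particular it is strictly monotone. -/
theorem nd_eigenfunction_strictly_monotone
    (a b : ℝ → ℝ) (D : ℝ≥0∞) (hD : 0 < D) (hyp : Hyp a b D)
    (lam : ℝ) (hlam : ENNReal.ofReal lam = lam0 a b D) (hpos : 0 < lam)
    (g g' g'' : ℝ → ℝ) (heig : AEEigenfunction a b D lam g g' g'')
    (hnz : ¬∀ x ∈ coI D, g x = 0)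
    (hNeumann : g' 0 = 0) (hDirichlet : D ≠ ∞ → g D.toReal = 0) :
    (∀ x ∈ ooI D, g' x ≠ 0) ∧
    (StrictMonoOn g (coI D) ∨ StrictAntiOn g (coI D)) := by
  have hne : ∀ x ∈ ooI D, g' x ≠ 0 := by
    intro x hx hc
    have hgx := eq_zero_of_deriv_eq_zero hyp hlam hpos heig hNeumann hx hc
    refine hnz fun y hy => ?_
    have hpD : ENNReal.ofReal (max x y) < D := by
      rcases max_choice x y with h | h <;> rw [h]
      exacts [hx.2, hy.2]
    have hp : 0 ≤ max x y := hx.1.le.trans (le_max_left _ _)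
    exact cauchy_unique hp (continuousOn_exp_Cf hyp hp hpD) (fun _ => Real.exp_pos _)
      (isPrimitive_g heig hp hpD) (intervalIntegrable_weight hyp hp hpD)
      (isPrimitive_flux hyp heig hp hpD) ⟨hx.1.le, le_max_left _ _⟩ hgx hc y
      ⟨hy.1, le_max_right _ _⟩
  refine ⟨hne, ?_⟩
  have hinterior : ∀ x ∈ interior (coI D), x ∈ ooI D := by
    intro x hx
    have h0 : x ∈ interior (Ici (0 : ℝ)) := interior_mono (fun _ h => h.1) hx
    rw [interior_Ici] at h0
    exact ⟨h0, (interior_subset hx).2⟩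
  rcases hasDerivWithinAt_forall_lt_or_forall_gt_of_forall_ne (convex_ooI D)
    (fun x hx => (heig.2.2.1 x hx).hasDerivWithinAt) hne with h | h
  · refine Or.inr (strictAntiOn_of_deriv_neg (convex_coI D) heig.1 fun x hx => ?_)
    rw [(heig.2.2.1 x (hinterior x hx)).deriv]
    exact h x (hinterior x hx)
  · refine Or.inl (strictMonoOn_of_deriv_pos (convex_coI D) heig.1 fun x hx => ?_)
    rw [(heig.2.2.1 x (hinterior x hx)).deriv]
    exact h x (hinterior x hx)
end
end

section
/- Under hypothesis (1.0), if g is a non-zero a.e. eigenfunction of the ND principal eigenvalue λ₀ (with Neumann boundary g'(0) = 0 and, when D < ∞, Dirichlet boundary g(D) = 0), then g is either strictly positive at every point of [0,D) or strictly negative at every point of [0,D). -/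
/-!
The equation `a g'' + b g' = -λ g` says that the flux `e^C g'` is absolutely continuous with a.e.
derivative `-λ (e^C / a) g` (`NDEig.exists_flux`). By the Neumann condition, testing it against
`g - g p` on `[0, p]` gives `∫ e^C g'² = λ ∫ (e^C / a) g (g - g p)` (`NDEig.energy_eq`).

Suppose `λ > 0`, `g 0 ≥ 0` and `g` takes a value `-c < 0`, first reached at `p`. On `[0, p]` the
function `s = g + c` is nonnegative and vanishes at `p`, and by the identity above
`∫ e^C s'² - λ ∫ (e^C / a) s² = -c λ ∫ (e^C / a) s < 0`. Replacing `s` by `s² / (s + c/4)` decreases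
the energy, keeps enough of the mass for the difference to stay negative, and makes the extension by
zero beyond `p` a `C¹` function, which contradicts the definition of `λ₀` (`NDEig.rayleigh_le`,
`NDEig.nonneg_of_init_nonneg`). Hence `g 0 ≥ 0` forces `g ≥ 0`.

Applied to `g` and `-g`, this shows `g 0 ≠ 0` for a non-zero `g`, with no appeal to uniqueness for
the differential equation. If `g 0 > 0`, a first zero of `g` would be an interior minimum, where the
flux vanishes, although it is `-λ ∫ (e^C / a) g < 0` there (`NDEig.pos_of_init_pos`). When `λ = 0`
the flux is zero and `g` is constant.
-/

open MeasureTheory Set Filter Topology ENNReal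

noncomputable section

namespace NDEig

/-- The density `e^C / a` of `μ` with respect to Lebesgue measure. -/
def dens (a b : ℝ → ℝ) (x : ℝ) : ℝ := Real.exp (Cf a b x) / a x

/-! ### Intervals with extended right endpoint -/

section Intervals

variable {D : ℝ≥0∞} {x y : ℝ}

lemma coI_of_le (hy : ENNReal.ofReal y < D) (h0 : 0 ≤ x) (hxy : x ≤ y) : x ∈ coI D :=
  ⟨h0, (ENNReal.ofReal_le_ofReal hxy).trans_lt hy⟩

lemma ooI_of_le (hy : ENNReal.ofReal y < D) (h0 : 0 < x) (hxy : x ≤ y) : x ∈ ooI D :=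
  ⟨h0, (ENNReal.ofReal_le_ofReal hxy).trans_lt hy⟩

lemma isOpen_ooI : IsOpen (ooI D) := by
  have h1 : IsOpen {x : ℝ | 0 < x} := isOpen_Ioi
  have h2 : IsOpen {x : ℝ | ENNReal.ofReal x < D} :=
    isOpen_Iio.preimage ENNReal.continuous_ofReal
  exact h1.inter h2

end Intervals

/-! ### Absolutely continuous functions -/

section AbsCont

/-- Fundamental theorem of calculus for an absolutely continuous function whose derivative is
identified only almost everywhere. -/
lemma ftc_ae {f f' : ℝ → ℝ} {p : ℝ} (hf : AbsolutelyContinuousOnInterval f 0 p)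
    (hd : ∀ᵐ x, x ∈ uIcc 0 p → HasDerivAt f (f' x) x) :
    ∫ x in 0..p, f' x = f p - f 0 := by
  rw [← hf.integral_deriv_eq_sub]
  refine intervalIntegral.integral_congr_ae ?_
  filter_upwards [hd] with x hx hx'
  exact (hx (uIoc_subset_uIcc hx')).deriv.symm

lemma abs_exp_sub_exp_le {x y M : ℝ} (hx : x ≤ M) (hy : y ≤ M) :
    |Real.exp x - Real.exp y| ≤ Real.exp M * |x - y| := by
  wlog h : y ≤ x generalizing x y
  · rw [abs_sub_comm, abs_sub_comm x]
    exact this hy hx (le_of_not_ge h)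
  rw [abs_of_nonneg (by simpa using h), abs_of_nonneg (by simpa using h)]
  have h1 : Real.exp y = Real.exp x * Real.exp (y - x) := by
    rw [← Real.exp_add]; congr 1; ring
  have h2 := Real.add_one_le_exp (y - x)
  have h3 : Real.exp x * (x - y) ≤ Real.exp M * (x - y) := by
    gcongr
  nlinarith [Real.exp_pos x]

/-- Absolute continuity survives composition with `exp`, which is Lipschitz on the bounded range
of `f`. -/
lemma ac_exp {f : ℝ → ℝ} {p q : ℝ} (hf : AbsolutelyContinuousOnInterval f p q) :
    AbsolutelyContinuousOnInterval (fun x => Real.exp (f x)) p q := by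
  obtain ⟨M, hM⟩ := hf.exists_bound
  have hM' : ∀ x ∈ uIcc p q, f x ≤ M := fun x hx => (le_abs_self _).trans (hM x hx)
  rw [absolutelyContinuousOnInterval_iff] at hf ⊢
  intro ε hε
  obtain ⟨δ, hδ, h⟩ := hf (ε / Real.exp M) (by positivity)
  refine ⟨δ, hδ, fun E hE hs => ?_⟩
  have h1 := h E hE hs
  rw [lt_div_iff₀ (Real.exp_pos M), mul_comm] at h1
  refine lt_of_le_of_lt ?_ h1
  rw [Finset.mul_sum]
  refine Finset.sum_le_sum fun i hi => ?_
  have hi' := hE.1 i hi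
  exact abs_exp_sub_exp_le (hM' _ hi'.1) (hM' _ hi'.2)

end AbsCont

/-! ### The flux `e^C g'` and the energy identity -/

section Flux

variable {a b : ℝ → ℝ} {D : ℝ≥0∞} {p : ℝ}

lemma Cf_eq {x : ℝ} (hx : 0 ≤ x) : Cf a b x = ∫ u in 0..x, b u / a u := by
  rw [Cf, intervalIntegral.integral_of_le hx, integral_Ioc_eq_integral_Ioo]

lemma intervalIntegrable_ba (hyp : Hyp a b D) (hp : 0 ≤ p) (hpD : ENNReal.ofReal p < D) :
    IntervalIntegrable (fun u => b u / a u) volume 0 p := by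
  rw [intervalIntegrable_iff_integrableOn_Icc_of_le hp]
  exact (hyp.2.2.2 p hp hpD.le).1

lemma intervalIntegrable_dens (hyp : Hyp a b D) (hp : 0 ≤ p) (hpD : ENNReal.ofReal p < D) :
    IntervalIntegrable (dens a b) volume 0 p := by
  rw [intervalIntegrable_iff_integrableOn_Icc_of_le hp]
  exact (hyp.2.2.2 p hp hpD.le).2

lemma continuousOn_Cf (hyp : Hyp a b D) (hp : 0 ≤ p) (hpD : ENNReal.ofReal p < D) :
    ContinuousOn (Cf a b) (Icc 0 p) := by
  have h := intervalIntegral.continuousOn_primitive_interval'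
    (intervalIntegrable_ba hyp hp hpD) left_mem_uIcc
  rw [uIcc_of_le hp] at h
  exact h.congr fun x hx => Cf_eq hx.1

lemma dens_pos (hyp : Hyp a b D) {x : ℝ} (hx : x ∈ ooI D) : 0 < dens a b x :=
  div_pos (Real.exp_pos _) (hyp.2.2.1 x hx)

variable {lam : ℝ} {g g' g'' : ℝ → ℝ}

lemma continuousOn_g (heig : AEEigenfunction a b D lam g g' g'')
    (hpD : ENNReal.ofReal p < D) : ContinuousOn g (Icc 0 p) :=
  heig.1.mono fun _ hx => coI_of_le hpD hx.1 hx.2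

lemma continuousOn_g' (heig : AEEigenfunction a b D lam g g' g'')
    (hpD : ENNReal.ofReal p < D) : ContinuousOn g' (Icc 0 p) :=
  heig.2.1.mono fun _ hx => coI_of_le hpD hx.1 hx.2

/-- The eigenvalue equation in divergence form: `e^C g'` is absolutely continuous on `[0, p]`, with
a.e. derivative `-λ (e^C / a) g`. The function `W` is built from integrals `∫ u in 0..x`, so it
agrees with `e^C g'` on `[0, p]` but possibly not to the left of `0`, where `Cf` vanishes and `g'`
is unconstrained. -/
lemma exists_flux (hyp : Hyp a b D) (heig : AEEigenfunction a b D lam g g' g'')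
    (hN : g' 0 = 0) (hp : 0 < p) (hpD : ENNReal.ofReal p < D) :
    ∃ W : ℝ → ℝ, AbsolutelyContinuousOnInterval W 0 p ∧
      (∀ x ∈ Icc 0 p, W x = Real.exp (Cf a b x) * g' x) ∧
      ∀ᵐ x, x ∈ uIcc 0 p → HasDerivAt W (-lam * (dens a b x * g x)) x := by
  have hba := intervalIntegrable_ba hyp hp.le hpD
  have hg2 : IntervalIntegrable g'' volume 0 p := by
    rw [intervalIntegrable_iff_integrableOn_Icc_of_le hp.le]
    exact heig.2.2.2.2.1 p hp.le hpD
  set E : ℝ → ℝ := fun x => Real.exp (∫ u in 0..x, b u / a u) with hE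
  set V : ℝ → ℝ := fun x => ∫ u in 0..x, g'' u with hV
  have hEeq : ∀ x, 0 ≤ x → E x = Real.exp (Cf a b x) := fun x hx => by rw [Cf_eq hx]
  have hVeq : ∀ x ∈ Icc 0 p, V x = g' x := fun x hx => by
    rw [heig.2.2.2.2.2.1 x (coI_of_le hpD hx.1 hx.2), hN, zero_add, hV]
    simp only
    rw [intervalIntegral.integral_of_le hx.1, integral_Ioc_eq_integral_Ioo]
  refine ⟨fun x => E x * V x, ?_, fun x hx => by simp only [hEeq x hx.1, hVeq x hx], ?_⟩
  · exact (ac_exp (hba.absolutelyContinuousOnInterval_intervalIntegral left_mem_uIcc)).fun_mul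
      (hg2.absolutelyContinuousOnInterval_intervalIntegral left_mem_uIcc)
  · have hae := (ae_restrict_iff' isOpen_ooI.measurableSet).1 heig.2.2.2.2.2.2
    have h0 : ∀ᵐ x : ℝ, x ≠ 0 := by simp [ae_iff, measure_singleton]
    filter_upwards [hba.ae_hasDerivAt_integral, hg2.ae_hasDerivAt_integral, hae, h0]
      with x h1 h2 h3 h4 hx
    have hx' : x ∈ Icc 0 p := by rwa [uIcc_of_le hp.le] at hx
    have hxo : x ∈ ooI D := ooI_of_le hpD (lt_of_le_of_ne hx'.1 h4.symm) hx'.2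
    have hd := (h1 hx 0 left_mem_uIcc).exp.mul (h2 hx 0 left_mem_uIcc)
    refine hd.congr_deriv ?_
    have ha := (hyp.2.2.1 x hxo).ne'
    have e1 := hEeq x hx'.1
    have e2 := hVeq x hx'
    simp only [hE, hV] at e1 e2
    rw [e1, e2, dens]
    have := h3 hxo
    field_simp
    linear_combination this

/-- The Neumann condition kills the boundary term at `0` in the integrated equation. -/
lemma flux_eq (hyp : Hyp a b D) (heig : AEEigenfunction a b D lam g g' g'')
    (hN : g' 0 = 0) (hp : 0 < p) (hpD : ENNReal.ofReal p < D) :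
    Real.exp (Cf a b p) * g' p = -lam * ∫ x in 0..p, dens a b x * g x := by
  obtain ⟨W, hac, hW, hd⟩ := exists_flux hyp heig hN hp hpD
  have h := ftc_ae hac hd
  rw [hW p ⟨hp.le, le_rfl⟩, hW 0 ⟨le_rfl, hp.le⟩, hN, intervalIntegral.integral_const_mul] at h
  linarith

/-- The equation tested against `g - g p` on `[0, p]`: the boundary terms vanish at `0` by the
Neumann condition and at `p` because the test function does. -/
lemma energy_eq (hyp : Hyp a b D) (heig : AEEigenfunction a b D lam g g' g'')
    (hN : g' 0 = 0) (hp : 0 < p) (hpD : ENNReal.ofReal p < D) :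
    ∫ x in 0..p, Real.exp (Cf a b x) * g' x ^ 2 =
      lam * ∫ x in 0..p, dens a b x * g x * (g x - g p) := by
  obtain ⟨W, hac, hW, hd⟩ := exists_flux hyp heig hN hp hpD
  have hii : IntervalIntegrable g' volume 0 p := by
    refine ContinuousOn.intervalIntegrable ?_
    rw [uIcc_of_le hp.le]
    exact continuousOn_g' heig hpD
  -- The primitive of `g'` based at `p` is an absolutely continuous copy of `g - g p` on `[0, p]`.
  have hGac := hii.absolutelyContinuousOnInterval_intervalIntegral (c := p) right_mem_uIcc
  have hGeq : ∀ x ∈ Icc 0 p, (∫ u in p..x, g' u) = g x - g p := by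
    intro x hx
    rw [intervalIntegral.integral_symm,
      intervalIntegral.integral_eq_sub_of_hasDerivAt_of_le hx.2
        ((continuousOn_g heig hpD).mono (Icc_subset_Icc_left hx.1))
        (fun y hy => heig.2.2.1 y (ooI_of_le hpD (hx.1.trans_lt hy.1) hy.2.le))
        (hii.mono_set (by
          rw [uIcc_of_le hx.2, uIcc_of_le hp.le]; exact Icc_subset_Icc_left hx.1))]
    ring
  have h := hac.integral_mul_deriv_eq_deriv_mul hGac
  rw [hW 0 ⟨le_rfl, hp.le⟩, hN, intervalIntegral.integral_same] at h
  have e1 : ∫ x in 0..p, W x * deriv (fun x => ∫ u in p..x, g' u) x =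
      ∫ x in 0..p, Real.exp (Cf a b x) * g' x ^ 2 := by
    refine intervalIntegral.integral_congr_ae ?_
    filter_upwards [hii.ae_hasDerivAt_integral] with x hx hx'
    have hx2 := hx'
    rw [uIoc_of_le hp.le] at hx2
    rw [(hx (uIoc_subset_uIcc hx') p right_mem_uIcc).deriv, hW x ⟨hx2.1.le, hx2.2⟩]
    ring
  have e2 : ∫ x in 0..p, deriv W x * (∫ u in p..x, g' u) =
      ∫ x in 0..p, -lam * (dens a b x * g x * (g x - g p)) := by
    refine intervalIntegral.integral_congr_ae ?_
    filter_upwards [hd] with x hx hx'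
    have hx2 := hx'
    rw [uIoc_of_le hp.le] at hx2
    rw [(hx (uIoc_subset_uIcc hx')).deriv, hGeq x ⟨hx2.1.le, hx2.2⟩]
    ring
  rw [e1, e2, intervalIntegral.integral_const_mul] at h
  linarith

end Flux

/-! ### The Rayleigh quotient inequality -/

section Variational

variable {a b : ℝ → ℝ} {D : ℝ≥0∞} {p lam : ℝ}

lemma setLIntegral_ooI_eq {G : ℝ → ℝ≥0∞} (hpD : ENNReal.ofReal p < D)
    (hG : ∀ x, p < x → G x = 0) :
    ∫⁻ x in ooI D, G x = ∫⁻ x in Ioc 0 p, G x := by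
  rw [← lintegral_indicator isOpen_ooI.measurableSet, ← lintegral_indicator measurableSet_Ioc]
  congr 1
  ext x
  by_cases hx : x ∈ Ioc 0 p
  · rw [indicator_of_mem hx, indicator_of_mem (ooI_of_le hpD hx.1 hx.2)]
  · rw [indicator_of_notMem hx]
    by_cases hx' : x ∈ ooI D
    · rw [indicator_of_mem hx']
      exact hG x (lt_of_not_ge fun h => hx ⟨hx'.1, h⟩)
    · rw [indicator_of_notMem hx']

lemma setLIntegral_eq_ofReal {H H' : ℝ → ℝ} (hp : 0 ≤ p) (hpD : ENNReal.ofReal p < D)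
    (hH : ∀ x, p < x → H x = 0) (hHH' : ∀ x ∈ Ioc 0 p, H x = H' x)
    (h0 : ∀ x ∈ Ioc 0 p, 0 ≤ H' x) (hi : IntervalIntegrable H' volume 0 p) :
    ∫⁻ x in ooI D, ENNReal.ofReal (H x) = ENNReal.ofReal (∫ x in 0..p, H' x) := by
  rw [setLIntegral_ooI_eq hpD (fun x hx => by rw [hH x hx, ENNReal.ofReal_zero]),
    intervalIntegral.integral_of_le hp, ofReal_integral_eq_lintegral_ofReal]
  · exact setLIntegral_congr_fun measurableSet_Ioc fun x hx => by simp only [hHH' x hx]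
  · exact (intervalIntegrable_iff_integrableOn_Ioc_of_le hp).1 hi
  · exact (ae_restrict_iff' measurableSet_Ioc).2 (Eventually.of_forall h0)

lemma aemeasurable_dens (hyp : Hyp a b D) :
    AEMeasurable (dens a b) (volume.restrict (ooI D)) := by
  have hC : ContinuousOn (Cf a b) (ooI D) := by
    intro x hx
    obtain ⟨r, hr1, hr2⟩ : ∃ r : ℝ, x < r ∧ ENNReal.ofReal r < D := by
      have := (isOpen_ooI (D := D)).mem_nhds hx
      obtain ⟨ε, hε, hb⟩ := Metric.mem_nhds_iff.1 this
      refine ⟨x + ε / 2, by linarith, (hb ?_).2⟩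
      simp [abs_of_pos hε, hε]
    have h0 : 0 < x := hx.1
    exact ((continuousOn_Cf hyp (h0.trans hr1).le hr2).continuousAt
      (Icc_mem_nhds h0 hr1)).continuousWithinAt
  exact ((Real.continuous_exp.comp_continuousOn hC).aemeasurable
    isOpen_ooI.measurableSet).div hyp.1.aemeasurable

/-- The Rayleigh inequality for a function on `[0, p]` that is `C¹` on `(0, p]` and vanishes at `p`
together with its derivative. Such a function extends by zero to a `C¹` function on `(0, D)`, hence
is, after normalization, a competitor in the definition of `lam0`. -/
lemma rayleigh_le (hyp : Hyp a b D) (hlam : ENNReal.ofReal lam = lam0 a b D)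
    (hp : 0 < p) (hpD : ENNReal.ofReal p < D) {F h : ℝ → ℝ}
    (hF : ContinuousOn F (Icc 0 p)) (hh : ContinuousOn h (Icc 0 p))
    (hd : ∀ x ∈ Ioc 0 p, HasDerivAt F (h x) x) (hFp : F p = 0) (hhp : h p = 0)
    (hm : 0 < ∫ x in 0..p, dens a b x * F x ^ 2) :
    lam * ∫ x in 0..p, dens a b x * F x ^ 2 ≤ ∫ x in 0..p, Real.exp (Cf a b x) * h x ^ 2 := by
  set m := ∫ x in 0..p, dens a b x * F x ^ 2 with hmdef
  -- `k` normalizes the competitor to `μ(f²) = 1`.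
  set k : ℝ := (√m)⁻¹ with hk
  have hk2 : k ^ 2 * m = 1 := by
    rw [hk, inv_pow, Real.sq_sqrt hm.le, inv_mul_cancel₀ (ne_of_gt hm)]
  -- Since `F p = h p = 0`, composing with `min · p` is extension by zero beyond `p`.
  set f : ℝ → ℝ := fun x => k * F (min x p) with hf
  set f' : ℝ → ℝ := fun x => k * h (min x p) with hf'
  have hmaps : MapsTo (fun x : ℝ => min x p) (Ici 0) (Icc 0 p) :=
    fun x hx => ⟨le_min hx hp.le, min_le_right _ _⟩
  have hmin : ContinuousOn (fun x : ℝ => min x p) (Ici 0) := by fun_prop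
  have hfc : ContinuousOn f (Ici 0) := (hF.comp hmin hmaps).const_mul k
  have hfc' : ContinuousOn f' (Ici 0) := (hh.comp hmin hmaps).const_mul k
  have hfz : ∀ x, p ≤ x → f x = 0 := fun x hx => by simp [hf, min_eq_right hx, hFp]
  have hfz' : ∀ x, p ≤ x → f' x = 0 := fun x hx => by simp [hf', min_eq_right hx, hhp]
  have hfd : ∀ x, 0 < x → HasDerivAt f (f' x) x := by
    intro x hx
    rcases lt_trichotomy x p with hxp | hxp | hxp
    · have h1 := (hd x ⟨hx, hxp.le⟩).const_mul k
      have h2 : f' x = k * h x := by simp [hf', min_eq_left hxp.le]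
      rw [h2]
      refine h1.congr_of_eventuallyEq ?_
      filter_upwards [Iio_mem_nhds hxp] with y hy
      simp [hf, min_eq_left (mem_Iio.1 hy).le]
    · subst hxp
      have h1 := (hd x ⟨hx, le_rfl⟩).const_mul k
      rw [hhp, mul_zero] at h1
      rw [hfz' x le_rfl, ← hasDerivWithinAt_univ, ← Iic_union_Ici (a := x)]
      refine HasDerivWithinAt.union ?_ ?_
      · refine h1.hasDerivWithinAt.congr (fun y hy => ?_) ?_
        · simp [hf, min_eq_left (mem_Iic.1 hy)]
        · simp [hf]
      · exact (hasDerivWithinAt_const x (Ici x) (0 : ℝ)).congr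
          (fun y hy => hfz y hy) (hfz x le_rfl)
    · rw [hfz' x hxp.le]
      refine (hasDerivAt_const x (0 : ℝ)).congr_of_eventuallyEq ?_
      filter_upwards [Ioi_mem_nhds hxp] with y hy
      exact hfz y (le_of_lt hy)
  have hC1 : C1C D f := by
    refine ⟨hfc.mono fun x hx => hx.1, fun x hx => (hfd x hx.1).differentiableAt, ?_⟩
    exact (hfc'.mono fun x hx => le_of_lt hx.1).congr fun x hx => (hfd x hx.1).deriv
  have hdens : IntervalIntegrable (fun x => dens a b x * F x ^ 2) volume 0 p := by
    refine (intervalIntegrable_dens hyp hp.le hpD).mul_continuousOn ?_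
    rw [uIcc_of_le hp.le]
    exact hF.pow 2
  have hen : IntervalIntegrable (fun x => Real.exp (Cf a b x) * h x ^ 2) volume 0 p := by
    refine ContinuousOn.intervalIntegrable ?_
    rw [uIcc_of_le hp.le]
    exact (Real.continuous_exp.comp_continuousOn (continuousOn_Cf hyp hp.le hpD)).mul (hh.pow 2)
  have hmu : muL2 a b D f = 1 := by
    have hfm : AEMeasurable f (volume.restrict (ooI D)) :=
      (hfc.mono fun x hx => le_of_lt hx.1).aemeasurable isOpen_ooI.measurableSet
    have hwm : AEMeasurable (fun x => ENNReal.ofReal (Real.exp (Cf a b x) / a x))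
        (volume.restrict (ooI D)) := (aemeasurable_dens hyp).ennreal_ofReal
    rw [muL2, muM, lintegral_withDensity_eq_lintegral_mul₀ hwm (hfm.pow_const 2).ennreal_ofReal]
    have e : ∫⁻ x in ooI D, ((fun x => ENNReal.ofReal (Real.exp (Cf a b x) / a x)) *
        fun x => ENNReal.ofReal (f x ^ 2)) x =
        ∫⁻ x in ooI D, ENNReal.ofReal (dens a b x * f x ^ 2) := by
      refine setLIntegral_congr_fun isOpen_ooI.measurableSet fun x hx => ?_
      exact (ENNReal.ofReal_mul (dens_pos hyp hx).le).symm
    rw [e, setLIntegral_eq_ofReal (H' := fun x => k ^ 2 * (dens a b x * F x ^ 2)) hp.le hpD,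
      intervalIntegral.integral_const_mul, ← hmdef, hk2, ENNReal.ofReal_one]
    · intro x hx; simp [hfz x hx.le]
    · intro x hx; simp only [hf, min_eq_left hx.2]; ring
    · intro x hx
      have := dens_pos hyp (ooI_of_le hpD hx.1 hx.2)
      positivity
    · exact hdens.const_mul _
  have hDf : Dform a b D f =
      ENNReal.ofReal (k ^ 2 * ∫ x in 0..p, Real.exp (Cf a b x) * h x ^ 2) := by
    rw [Dform, setLIntegral_eq_ofReal
      (H' := fun x => k ^ 2 * (Real.exp (Cf a b x) * h x ^ 2)) hp.le hpD,
      intervalIntegral.integral_const_mul]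
    · intro x hx
      simp [(hfd x (hp.trans hx)).deriv, hfz' x hx.le]
    · intro x hx
      simp only [(hfd x hx.1).deriv, hf', min_eq_left hx.2]; ring
    · intro x hx; positivity
    · exact hen.const_mul _
  have hle : lam0 a b D ≤ Dform a b D f := by
    refine sInf_le ⟨f, hC1, ⟨p, hp.le, hpD, fun x hx => hfz x hx.le⟩, fun hD => ?_, hmu, rfl⟩
    exact hfz _ ((ENNReal.ofReal_le_iff_le_toReal hD).1 hpD.le)
  rw [← hlam, hDf, ENNReal.ofReal_le_ofReal_iff] at hle
  · calc lam * m ≤ (k ^ 2 * ∫ x in 0..p, Real.exp (Cf a b x) * h x ^ 2) * m := by gcongr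
      _ = (k ^ 2 * m) * ∫ x in 0..p, Real.exp (Cf a b x) * h x ^ 2 := by ring
      _ = _ := by rw [hk2, one_mul]
  · refine mul_nonneg (sq_nonneg k) (intervalIntegral.integral_nonneg hp.le fun x _ => ?_)
    positivity

end Variational

/-! ### Sign of the eigenfunction -/

section Sign

variable {a b : ℝ → ℝ} {D : ℝ≥0∞} {lam : ℝ} {g g' g'' : ℝ → ℝ}

/-- First time at which a continuous function reaches a level `v` below its initial value. -/
lemma exists_first_hit {y v : ℝ} (hy : 0 ≤ y) (hg : ContinuousOn g (Icc 0 y))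
    (h0 : v < g 0) (hyv : g y ≤ v) :
    ∃ p, 0 < p ∧ p ≤ y ∧ g p = v ∧ ∀ x ∈ Ico 0 p, v < g x := by
  set S := Icc 0 y ∩ g ⁻¹' {v} with hS
  have hcl : IsClosed S := hg.preimage_isClosed_of_isClosed isClosed_Icc isClosed_singleton
  have hbd : BddBelow S := ⟨0, fun x hx => hx.1.1⟩
  have hne : S.Nonempty := by
    obtain ⟨z, hz, hzv⟩ := intermediate_value_Icc' hy hg ⟨hyv, h0.le⟩
    exact ⟨z, hz, hzv⟩
  have hmem : sInf S ∈ S := hcl.csInf_mem hne hbd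
  have hval : g (sInf S) = v := hmem.2
  refine ⟨sInf S, lt_of_le_of_ne hmem.1.1 fun h => ?_, hmem.1.2, hval, fun x hx => ?_⟩
  · rw [← h] at hval
    linarith
  · by_contra! hcon
    have hxy : x ≤ y := hx.2.le.trans hmem.1.2
    obtain ⟨z, hz, hzv⟩ := intermediate_value_Icc' hx.1
      (hg.mono (Icc_subset_Icc_right hxy)) ⟨hcon, h0.le⟩
    have := csInf_le hbd (show z ∈ S from ⟨⟨hz.1, hz.2.trans hxy⟩, hzv⟩)
    linarith [hx.2, hz.2]

/-- If `g` took a negative value `-4e`, first reached at `p`, the `C¹` truncation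
`F = s² / (s + e)` of `s = g + 4e` on `[0, p]` would have Rayleigh quotient strictly below `λ`.
Indeed `∫ e^C F'² ≤ ∫ e^C g'² = λ ∫ (e^C/a) g s`, whereas `F² > g s` on `(0, p)`. The case `g 0 = 0`
is included. -/
lemma nonneg_of_init_nonneg (hyp : Hyp a b D) (hlam : ENNReal.ofReal lam = lam0 a b D)
    (hpos : 0 < lam) (heig : AEEigenfunction a b D lam g g' g'') (hN : g' 0 = 0)
    (h0 : 0 ≤ g 0) : ∀ x ∈ coI D, 0 ≤ g x := by
  intro y hy
  by_contra! hneg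
  obtain ⟨p, hp, hpy, hgp, hlt⟩ := exists_first_hit hy.1 (continuousOn_g heig hy.2)
    (hneg.trans_le h0) le_rfl
  have hpD : ENNReal.ofReal p < D := (coI_of_le hy.2 hp.le hpy).2
  set e := -g y / 4 with he
  have hepos : 0 < e := by linarith
  have hgp4 : g p = -(4 * e) := by rw [hgp, he]; ring
  set s : ℝ → ℝ := fun x => g x - g p with hs
  have hs0 : ∀ x ∈ Icc 0 p, 0 ≤ s x := by
    intro x hx
    rcases hx.2.lt_or_eq with h | h
    · have := hlt x ⟨hx.1, h⟩
      simp only [hs]; linarith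
    · simp [hs, h]
  have hspos : ∀ x ∈ Ioo 0 p, 0 < s x := fun x hx => by
    have := hlt x ⟨hx.1.le, hx.2⟩
    simp only [hs]; linarith
  have hse : ∀ x ∈ Icc 0 p, 0 < s x + e := fun x hx => by linarith [hs0 x hx]
  have hsp : s p = 0 := by simp [hs]
  have hgc := continuousOn_g heig hpD
  have hgc' := continuousOn_g' heig hpD
  have hsc : ContinuousOn s (Icc 0 p) := hgc.sub continuousOn_const
  have hse_c : ContinuousOn (fun x => s x + e) (Icc 0 p) := hsc.add continuousOn_const
  -- `t ↦ t² / (t + e)` has derivative in `[0, 1]`, vanishing at `t = 0`.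
  set F : ℝ → ℝ := fun x => s x ^ 2 / (s x + e) with hF
  set φ : ℝ → ℝ := fun x => (s x ^ 2 + 2 * s x * e) / (s x + e) ^ 2 with hφ
  have hFc : ContinuousOn F (Icc 0 p) := (hsc.pow 2).div hse_c fun x hx => (hse x hx).ne'
  have hφc : ContinuousOn φ (Icc 0 p) := by
    refine ContinuousOn.div (by fun_prop) (hse_c.pow 2) fun x hx => ?_
    exact (pow_pos (hse x hx) 2).ne'
  have hd : ∀ x ∈ Ioc 0 p, HasDerivAt F (φ x * g' x) x := by
    intro x hx
    have h1 : HasDerivAt s (g' x) x :=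
      (heig.2.2.1 x (ooI_of_le hpD hx.1 hx.2)).sub_const _
    have hne := (hse x ⟨hx.1.le, hx.2⟩).ne'
    refine ((h1.pow 2).div (h1.add_const e) hne).congr_deriv ?_
    simp only [hφ, Pi.pow_apply]
    field_simp
    push_cast
    ring
  have hw : IntervalIntegrable (dens a b) volume 0 p := intervalIntegrable_dens hyp hp.le hpD
  have hwF : IntervalIntegrable (fun x => dens a b x * F x ^ 2) volume 0 p := by
    refine hw.mul_continuousOn ?_
    rw [uIcc_of_le hp.le]; exact hFc.pow 2
  have hwg : IntervalIntegrable (fun x => dens a b x * g x * (g x - g p)) volume 0 p := by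
    simp_rw [mul_assoc]
    refine hw.mul_continuousOn ?_
    rw [uIcc_of_le hp.le]; exact hgc.mul hsc
  have hm : 0 < ∫ x in 0..p, dens a b x * F x ^ 2 := by
    refine intervalIntegral.intervalIntegral_pos_of_pos_on hwF (fun x hx => ?_) hp
    have h1 := dens_pos hyp (ooI_of_le hpD hx.1 hx.2.le)
    have h2 := hspos x hx
    simp only [hF]; positivity
  have hray := rayleigh_le hyp hlam hp hpD hFc (hφc.mul hgc') hd
    (by simp [hF, hsp]) (by simp [hφ, hsp]) hm
  have hE : ContinuousOn (fun x => Real.exp (Cf a b x)) (Icc 0 p) :=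
    Real.continuous_exp.comp_continuousOn (continuousOn_Cf hyp hp.le hpD)
  have hmono : ∫ x in 0..p, Real.exp (Cf a b x) * (φ x * g' x) ^ 2 ≤
      ∫ x in 0..p, Real.exp (Cf a b x) * g' x ^ 2 := by
    refine intervalIntegral.integral_mono_on hp.le ?_ ?_ fun x hx => ?_
    · refine ContinuousOn.intervalIntegrable ?_
      rw [uIcc_of_le hp.le]; exact hE.mul ((hφc.mul hgc').pow 2)
    · refine ContinuousOn.intervalIntegrable ?_
      rw [uIcc_of_le hp.le]; exact hE.mul (hgc'.pow 2)
    · have h1 := hs0 x hx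
      have h2 : 0 ≤ φ x := by simp only [hφ]; positivity
      have h3 : φ x ≤ 1 := by
        simp only [hφ]
        rw [div_le_one (by positivity)]
        nlinarith [sq_nonneg e]
      rw [mul_pow]
      have h4 : φ x ^ 2 ≤ 1 := pow_le_one₀ h2 h3
      gcongr
      nlinarith [sq_nonneg (g' x)]
  have hen := energy_eq hyp heig hN hp hpD
  have hdiff : 0 < ∫ x in 0..p, (dens a b x * F x ^ 2 - dens a b x * g x * (g x - g p)) := by
    refine intervalIntegral.intervalIntegral_pos_of_pos_on (hwF.sub hwg) (fun x hx => ?_) hp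
    have h1 := dens_pos hyp (ooI_of_le hpD hx.1 hx.2.le)
    have h2 := hspos x hx
    have hg : g x = s x - 4 * e := by simp only [hs]; linarith
    have key : dens a b x * F x ^ 2 - dens a b x * g x * (g x - g p) =
        dens a b x * s x * (2 * e * s x ^ 2 + 7 * e ^ 2 * s x + 4 * e ^ 3) / (s x + e) ^ 2 := by
      have : g x - g p = s x := rfl
      rw [this, hg]
      simp only [hF]
      have hne : s x + e ≠ 0 := by positivity
      field_simp
      ring
    rw [key]; positivity
  rw [intervalIntegral.integral_sub hwF hwg] at hdiff
  have := mul_pos hpos hdiff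
  simp only [Pi.mul_apply] at hray
  linarith

lemma eig_neg (heig : AEEigenfunction a b D lam g g' g'') :
    AEEigenfunction a b D lam (-g) (-g') (-g'') := by
  obtain ⟨h1, h2, h3, h4, h5, h6, h7⟩ := heig
  refine ⟨h1.neg, h2.neg, fun x hx => (h3 x hx).neg, h4.neg, fun p hp hpD => (h5 p hp hpD).neg,
    fun x hx => ?_, ?_⟩
  · simp only [Pi.neg_apply]
    rw [h6 x hx, integral_neg]
    ring
  · filter_upwards [h7] with x hx
    simp only [Pi.neg_apply]
    linarith

/-- A first zero of the nonnegative function `g` would be an interior minimum, so the flux would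
vanish there, although it equals `-λ` times the integral of a positive function. -/
lemma pos_of_init_pos (hyp : Hyp a b D) (hlam : ENNReal.ofReal lam = lam0 a b D)
    (hpos : 0 < lam) (heig : AEEigenfunction a b D lam g g' g'') (hN : g' 0 = 0)
    (h0 : 0 < g 0) : ∀ x ∈ coI D, 0 < g x := by
  intro y hy
  by_contra! hle
  obtain ⟨p, hp, hpy, hgp, hlt⟩ := exists_first_hit hy.1 (continuousOn_g heig hy.2) h0 hle
  have hpD : ENNReal.ofReal p < D := (coI_of_le hy.2 hp.le hpy).2
  have hpo : p ∈ ooI D := ⟨hp, hpD⟩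
  have hmin : IsLocalMin g p := by
    filter_upwards [isOpen_ooI.mem_nhds hpo] with x hx
    rw [hgp]
    exact nonneg_of_init_nonneg hyp hlam hpos heig hN h0.le x ⟨le_of_lt hx.1, hx.2⟩
  have hg'p : g' p = 0 := hmin.hasDerivAt_eq_zero (heig.2.2.1 p hpo)
  have hflux := flux_eq hyp heig hN hp hpD
  have hint : 0 < ∫ x in 0..p, dens a b x * g x := by
    refine intervalIntegral.intervalIntegral_pos_of_pos_on ?_ (fun x hx => ?_) hp
    · refine (intervalIntegrable_dens hyp hp.le hpD).mul_continuousOn ?_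
      rw [uIcc_of_le hp.le]; exact continuousOn_g heig hpD
    · exact mul_pos (dens_pos hyp (ooI_of_le hpD hx.1 hx.2.le)) (hlt x ⟨hx.1.le, hx.2⟩)
  rw [hg'p, mul_zero] at hflux
  nlinarith

lemma const_of_lam_zero (hyp : Hyp a b D) (heig : AEEigenfunction a b D 0 g g' g'')
    (hN : g' 0 = 0) : ∀ x ∈ coI D, g x = g 0 := by
  intro x hx
  rcases eq_or_lt_of_le hx.1 with h | h
  · rw [h]
  · obtain ⟨z, hz, hzs⟩ := exists_hasDerivAt_eq_slope g g' h (continuousOn_g heig hx.2)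
      fun y hy => heig.2.2.1 y (ooI_of_le hx.2 hy.1 hy.2.le)
    have hf := flux_eq hyp heig hN hz.1 (ooI_of_le hx.2 hz.1 hz.2.le).2
    rw [neg_zero, zero_mul] at hf
    rw [(mul_eq_zero.1 hf).resolve_left (Real.exp_pos _).ne', eq_comm, _root_.div_eq_zero_iff] at hzs
    rcases hzs with h1 | h1 <;> linarith

end Sign

end NDEig

/-- Lemma 3.5: any non-zero a.e. eigenfunction of the ND principal eigenvalue `λ₀`
(with Neumann boundary at `0` and Dirichlet boundary at `D` when `D < ∞`) is either
everywhere strictly positive or everywhere strictly negative on `[0,D)`. -/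
theorem nd_eigenfunction_fixed_sign
    (a b : ℝ → ℝ) (D : ℝ≥0∞) (hD : 0 < D) (hyp : Hyp a b D)
    (lam : ℝ) (hlam : ENNReal.ofReal lam = lam0 a b D) (hlam0 : 0 ≤ lam)
    (g g' g'' : ℝ → ℝ) (heig : AEEigenfunction a b D lam g g' g'')
    (hnz : ¬∀ x ∈ coI D, g x = 0)
    (hNeumann : g' 0 = 0) (hDirichlet : D ≠ ∞ → g D.toReal = 0) :
    (∀ x ∈ coI D, 0 < g x) ∨ (∀ x ∈ coI D, g x < 0) := by
  -- If `g 0 = 0`, both `g` and `-g` are nonnegative, so `g` vanishes identically.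
  have hg0 : g 0 ≠ 0 := by
    intro h0
    refine hnz fun x hx => ?_
    rcases hlam0.eq_or_lt with h | h
    · subst h
      rw [NDEig.const_of_lam_zero hyp heig hNeumann x hx, h0]
    · have h1 := NDEig.nonneg_of_init_nonneg hyp hlam h heig hNeumann h0.ge x hx
      have h2 := NDEig.nonneg_of_init_nonneg hyp hlam h (NDEig.eig_neg heig)
        (by simp [hNeumann]) (by simp [h0]) x hx
      simp only [Pi.neg_apply] at h2
      linarith
  rcases hlam0.eq_or_lt with h | h
  · subst h
    have hc := NDEig.const_of_lam_zero hyp heig hNeumann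
    rcases hg0.lt_or_gt with h1 | h1
    · exact Or.inr fun x hx => by rwa [hc x hx]
    · exact Or.inl fun x hx => by rwa [hc x hx]
  · rcases hg0.lt_or_gt with h1 | h1
    · refine Or.inr fun x hx => ?_
      have h2 := NDEig.pos_of_init_pos hyp hlam h (NDEig.eig_neg heig)
        (by simp [hNeumann]) (by simpa using h1) x hx
      simpa using h2
    · exact Or.inl (NDEig.pos_of_init_pos hyp hlam h heig hNeumann h1)
end
end

section
/- Under hypothesis (1.0) with D = ∞, if the ND principal eigenvalue λ₀ is strictly positive and g is a non-zero a.e. eigenfunction of λ₀ with Neumann boundary g'(0) = 0, then lim_{x→∞} g(x) = 0. -/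
/-!
Write `E = e^C`, `m = e^C / a`. The eigenvalue equation with Neumann condition says that the flux
`E g'` vanishes at `0` and is an indefinite integral of `-λ g m` (`NeumannSol`); this uses the
product and chain rules for absolutely continuous functions (`IsPrim.mul`, `IsPrim.exp`). Replacing
`g` by `-g`, assume `g 0 ≥ 0`.

* `g ≥ 0` (`NeumannSol.nonneg`). If `g` takes the value `-s < 0`, first at `x₁`, then for `β > 0`
  small the truncation `(g + s)₊^(1+β)`, cut off after `x₁`, is a compactly supported `C¹` test
  function. Integrating by parts against the flux shows that its Rayleigh quotient is strictly
  below `λ = λ₀`, which is impossible.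
* Hence `E g' ≤ 0`, so `g` decreases to a limit `L ≥ 0`. If `L > 0`, then `k = g - L / 2` is
  positive and satisfies `(E k')' = -λ (g / k) k m ≤ -Λ k m` with
  `Λ = λ g(0) / (g(0) - L / 2) > λ`. Picone's identity (`NeumannSol.picone`) then gives
  `D(f) ≥ Λ μ(f²)` for every test function (`NeumannSol.barta`), so `λ₀ ≥ Λ > λ`, a contradiction.
-/


open MeasureTheory Set Filter Topology ENNReal

noncomputable section

/-! ### Indefinite integrals -/

/-- `IsPrim p q F f`: on `[p, q]` the function `F` is an indefinite integral of the integrable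
function `f`; equivalently, `F` is absolutely continuous there and `F' = f` almost everywhere. -/
def IsPrim (p q : ℝ) (F f : ℝ → ℝ) : Prop :=
  IntervalIntegrable f volume p q ∧ ∀ x ∈ Icc p q, F x = F p + ∫ t in p..x, f t

namespace IsPrim

variable {p q : ℝ} {F f G k : ℝ → ℝ}

lemma mono_right (h : IsPrim p q F f) {r : ℝ} (hr : r ∈ Icc p q) : IsPrim p r F f :=
  ⟨h.1.mono_set (by
    rw [uIcc_of_le hr.1, uIcc_of_le (hr.1.trans hr.2)]; exact Icc_subset_Icc_right hr.2),
    fun x hx => h.2 x ⟨hx.1, hx.2.trans hr.2⟩⟩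

lemma mono_left (h : IsPrim p q F f) {r : ℝ} (hr : r ∈ Icc p q) : IsPrim r q F f := by
  have hpq := hr.1.trans hr.2
  refine ⟨h.1.mono_set (by
    rw [uIcc_of_le hr.2, uIcc_of_le hpq]; exact Icc_subset_Icc_left hr.1), fun x hx => ?_⟩
  rw [h.2 x ⟨hr.1.trans hx.1, hx.2⟩, h.2 r hr, add_assoc,
    intervalIntegral.integral_add_adjacent_intervals]
  · exact (h.mono_right hr).1
  · refine h.1.mono_set ?_
    rw [uIcc_of_le hx.1, uIcc_of_le hpq]
    exact Icc_subset_Icc hr.1 hx.2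

lemma congr (h : IsPrim p q F f) (hpq : p ≤ q) (hfk : ∀ᵐ x, x ∈ Ioc p q → f x = k x) :
    IsPrim p q F k := by
  refine ⟨h.1.congr_ae ?_, fun x hx => ?_⟩
  · rw [uIoc_of_le hpq]
    exact (ae_restrict_iff' measurableSet_Ioc).2 hfk
  · rw [h.2 x hx]
    congr 1
    refine intervalIntegral.integral_congr_ae ?_
    filter_upwards [hfk] with y hy hy'
    rw [uIoc_of_le hx.1] at hy'
    exact hy ⟨hy'.1, hy'.2.trans hx.2⟩

lemma eq_sub (h : IsPrim p q F f) (hpq : p ≤ q) : ∫ t in p..q, f t = F q - F p := by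
  rw [h.2 q ⟨hpq, le_rfl⟩]; ring

/-- The representative `F p + ∫ₚˣ f`, defined on all of `ℝ`, is absolutely continuous on `[p, q]`. -/
lemma ac (h : IsPrim p q F f) :
    AbsolutelyContinuousOnInterval (fun x => F p + ∫ t in p..x, f t) p q := by
  have h1 := h.1.absolutelyContinuousOnInterval_intervalIntegral (c := p) left_mem_uIcc
  have h2 : AbsolutelyContinuousOnInterval (fun _ : ℝ => F p) p q :=
    (LipschitzWith.const (F p)).lipschitzOnWith.absolutelyContinuousOnInterval
  exact h2.fun_add h1

lemma ae_hasDerivAt (h : IsPrim p q F f) :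
    ∀ᵐ x, x ∈ uIcc p q → HasDerivAt (fun x => F p + ∫ t in p..x, f t) (f x) x := by
  filter_upwards [h.1.ae_hasDerivAt_integral] with x hx hx'
  exact (hx hx' p left_mem_uIcc).const_add _

/-- An absolutely continuous function is a primitive of its almost everywhere derivative. -/
lemma of_ac (hpq : p ≤ q) (hG : AbsolutelyContinuousOnInterval G p q)
    (hd : ∀ᵐ x, x ∈ uIcc p q → HasDerivAt G (k x) x) (hFG : ∀ x ∈ Icc p q, F x = G x) :
    IsPrim p q F k := by
  have h1 : IsPrim p q F (deriv G) := by
    refine ⟨hG.intervalIntegrable_deriv, fun x hx => ?_⟩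
    have hs : uIcc p x ⊆ uIcc p q := by
      rw [uIcc_of_le hx.1, uIcc_of_le hpq]; exact Icc_subset_Icc_right hx.2
    rw [(hG.mono hs).integral_deriv_eq_sub, hFG x hx, hFG p ⟨le_rfl, hpq⟩]
    ring
  refine h1.congr hpq ?_
  filter_upwards [hd] with x hx hx'
  exact (hx (by rw [uIcc_of_le hpq]; exact Ioc_subset_Icc_self hx')).deriv

lemma mul (hpq : p ≤ q) (hF : IsPrim p q F f) (hG : IsPrim p q G k) :
    IsPrim p q (fun x => F x * G x) (fun x => f x * G x + F x * k x) := by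
  refine of_ac hpq (hF.ac.fun_mul hG.ac) ?_ fun x hx => by
    rw [hF.2 x hx, hG.2 x hx]
  filter_upwards [hF.ae_hasDerivAt, hG.ae_hasDerivAt] with x h1 h2 hx
  have hx' := hx
  rw [uIcc_of_le hpq] at hx'
  rw [hF.2 x hx', hG.2 x hx']
  exact (h1 hx).mul (h2 hx)

/-- Composition with `exp` keeps absolute continuity, since `exp` is Lipschitz on the compact
range of `F`. -/
lemma exp (hpq : p ≤ q) (hF : IsPrim p q F f) :
    IsPrim p q (fun x => Real.exp (F x)) (fun x => Real.exp (F x) * f x) := by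
  have hac := hF.ac
  have hd := hF.ae_hasDerivAt
  have heq := hF.2
  set H : ℝ → ℝ := fun x => F p + ∫ t in p..x, f t with hH
  obtain ⟨M, hM⟩ := hac.exists_bound
  have hlip : ∀ u v : ℝ, |u| ≤ M → |v| ≤ M →
      dist (Real.exp u) (Real.exp v) ≤ Real.exp M * dist u v := by
    intro u v hu hv
    have := (convex_Icc (-M) M).norm_image_sub_le_of_norm_deriv_le (f := Real.exp)
      (C := Real.exp M) (x := v) (y := u) (fun x _ => Real.differentiableAt_exp)
      (fun x hx => by
        rw [Real.deriv_exp, Real.norm_eq_abs, abs_of_pos (Real.exp_pos _)]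
        exact Real.exp_le_exp.2 hx.2) (abs_le.1 hv) (abs_le.1 hu)
    simpa [Real.dist_eq] using this
  have hE : AbsolutelyContinuousOnInterval (fun x => Real.exp (H x)) p q := by
    rw [absolutelyContinuousOnInterval_iff] at hac ⊢
    intro ε hε
    obtain ⟨δ, hδ, h⟩ := hac (ε / Real.exp M) (by positivity)
    refine ⟨δ, hδ, fun E hE hlt => ?_⟩
    have h1 := h E hE hlt
    rw [lt_div_iff₀ (Real.exp_pos _), mul_comm, Finset.mul_sum] at h1
    refine lt_of_le_of_lt (Finset.sum_le_sum fun i hi => ?_) h1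
    have hm := hE.1 i hi
    exact hlip _ _ (hM _ hm.1) (hM _ hm.2)
  refine of_ac hpq hE ?_ fun x hx => by simp only [hH, heq x hx]
  filter_upwards [hd] with x h1 hx
  have hx' := hx
  rw [uIcc_of_le hpq] at hx'
  rw [heq x hx']
  exact (h1 hx).exp

lemma of_hasDerivAt (hpq : p ≤ q) (hc : ContinuousOn F (Icc p q))
    (hd : ∀ x ∈ Ioo p q, HasDerivAt F (f x) x) (hi : IntervalIntegrable f volume p q) :
    IsPrim p q F f := by
  refine ⟨hi, fun x hx => ?_⟩
  rw [intervalIntegral.integral_eq_sub_of_hasDerivAt_of_le hx.1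
    (hc.mono (Icc_subset_Icc_right hx.2)) (fun y hy => hd y ⟨hy.1, hy.2.trans_le hx.2⟩)]
  · ring
  · refine hi.mono_set ?_
    rw [uIcc_of_le hx.1, uIcc_of_le hpq]
    exact Icc_subset_Icc_right hx.2

end IsPrim

/-! ### Coefficients, energy and the Rayleigh quotient -/

lemma ooI_top : ooI ∞ = Ioi 0 := by ext x; simp [ooI]

lemma coI_top : coI ∞ = Ici 0 := by ext x; simp [coI]

lemma ccI_top : ccI ∞ = Ici 0 := by ext x; simp [ccI]

lemma lintegral_Ioi_eq {F : ℝ → ℝ} {p : ℝ} (hp : 0 ≤ p) (h0 : ∀ x, p < x → F x = 0)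
    (hn : ∀ x ∈ Ioc 0 p, 0 ≤ F x) (hi : IntervalIntegrable F volume 0 p) :
    ∫⁻ x in Ioi 0, ENNReal.ofReal (F x) = ENNReal.ofReal (∫ x in (0 : ℝ)..p, F x) := by
  have h1 : ∫⁻ x in Ioi 0, ENNReal.ofReal (F x) = ∫⁻ x in Ioc 0 p, ENNReal.ofReal (F x) := by
    rw [← Ioc_union_Ioi_eq_Ioi hp, lintegral_union measurableSet_Ioi]
    · rw [setLIntegral_congr_fun (g := fun _ => 0) measurableSet_Ioi
        (fun x hx => by simp [h0 x hx])]
      simp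
    · exact Set.disjoint_left.2 fun x hx hx' => absurd hx.2 (not_le.2 hx')
  rw [h1, intervalIntegral.integral_of_le hp, ofReal_integral_eq_lintegral_ofReal]
  · exact (intervalIntegrable_iff_integrableOn_Ioc_of_le hp).1 hi
  · exact (ae_restrict_iff' measurableSet_Ioc).2 (Eventually.of_forall hn)

lemma le_lintegral_Ioi {F : ℝ → ℝ} {e p : ℝ} (he : 0 ≤ e) (hep : e ≤ p)
    (hn : ∀ x ∈ Ioc e p, 0 ≤ F x) (hi : IntervalIntegrable F volume e p) :
    ENNReal.ofReal (∫ x in e..p, F x) ≤ ∫⁻ x in Ioi 0, ENNReal.ofReal (F x) := by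
  rw [intervalIntegral.integral_of_le hep, ofReal_integral_eq_lintegral_ofReal]
  · exact lintegral_mono_set fun x hx => lt_of_le_of_lt he hx.1
  · exact (intervalIntegrable_iff_integrableOn_Ioc_of_le hep).1 hi
  · exact (ae_restrict_iff' measurableSet_Ioc).2 (Eventually.of_forall hn)

section Coefficients

variable {a b : ℝ → ℝ}

lemma Hyp.isPrim_Cf (h : Hyp a b ∞) {p : ℝ} (hp : 0 ≤ p) :
    IsPrim 0 p (Cf a b) (fun u => b u / a u) := by
  refine ⟨?_, fun x hx => ?_⟩
  · rw [intervalIntegrable_iff_integrableOn_Icc_of_le hp]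
    exact (h.2.2.2 p hp le_top).1
  · rw [intervalIntegral.integral_of_le hx.1, integral_Ioc_eq_integral_Ioo]
    simp [Cf]

lemma IsPrim.continuousOn {p q : ℝ} {F f : ℝ → ℝ} (h : IsPrim p q F f) (hpq : p ≤ q) :
    ContinuousOn F (Icc p q) := by
  have := h.ac.continuousOn
  rw [uIcc_of_le hpq] at this
  exact this.congr fun x hx => h.2 x hx

lemma continuousOn_Ici {F : ℝ → ℝ} (h : ∀ p, 0 ≤ p → ContinuousOn F (Icc 0 p)) :
    ContinuousOn F (Ici 0) := by
  intro x hx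
  have hx : 0 ≤ x := hx
  have := h (x + 1) (by linarith) x ⟨hx, by linarith⟩
  refine this.mono_of_mem_nhdsWithin ?_
  rw [← Ici_inter_Iic]
  exact inter_mem_nhdsWithin _ (Iic_mem_nhds (by linarith))

lemma Hyp.continuousOn_exp (h : Hyp a b ∞) :
    ContinuousOn (fun x => Real.exp (Cf a b x)) (Ici 0) :=
  Real.continuous_exp.comp_continuousOn
    (continuousOn_Ici fun _ hp => (h.isPrim_Cf hp).continuousOn hp)

lemma Hyp.intervalIntegrable_density (h : Hyp a b ∞) {p : ℝ} (hp : 0 ≤ p) :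
    IntervalIntegrable (fun x => Real.exp (Cf a b x) / a x) volume 0 p := by
  rw [intervalIntegrable_iff_integrableOn_Icc_of_le hp]
  exact (h.2.2.2 p hp le_top).2

lemma Hyp.density_pos (h : Hyp a b ∞) {x : ℝ} (hx : 0 < x) : 0 < Real.exp (Cf a b x) / a x :=
  div_pos (Real.exp_pos _) (h.2.2.1 x (by rw [ooI_top]; exact hx))

lemma muL2_eq_lintegral (h : Hyp a b ∞) {f : ℝ → ℝ} (hf : ContinuousOn f (Ici 0)) :
    muL2 a b ∞ f =
      ∫⁻ x in Ioi 0, ENNReal.ofReal (f x ^ 2 * (Real.exp (Cf a b x) / a x)) := by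
  have hE : AEMeasurable (fun x => Real.exp (Cf a b x)) (volume.restrict (Ioi 0)) :=
    (h.continuousOn_exp.mono Ioi_subset_Ici_self).aemeasurable measurableSet_Ioi
  have hf' : AEMeasurable f (volume.restrict (Ioi 0)) :=
    (hf.mono Ioi_subset_Ici_self).aemeasurable measurableSet_Ioi
  have hm : AEMeasurable (fun x => Real.exp (Cf a b x) / a x) (volume.restrict (Ioi 0)) :=
    hE.div h.1.aemeasurable
  rw [muL2, muM, ooI_top, lintegral_withDensity_eq_lintegral_mul₀ hm.ennreal_ofReal
    (hf'.pow_const 2).ennreal_ofReal]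
  refine lintegral_congr fun x => ?_
  rw [Pi.mul_apply, mul_comm, ENNReal.ofReal_mul (sq_nonneg _)]

lemma intervalIntegrable_sq_density (h : Hyp a b ∞) {f : ℝ → ℝ} (hf : ContinuousOn f (Ici 0))
    {p : ℝ} (hp : 0 ≤ p) :
    IntervalIntegrable (fun x => f x ^ 2 * (Real.exp (Cf a b x) / a x)) volume 0 p := by
  refine (h.intervalIntegrable_density hp).continuousOn_mul ((hf.pow 2).mono ?_)
  rw [uIcc_of_le hp]
  exact Icc_subset_Ici_self

lemma muL2_eq (h : Hyp a b ∞) {f : ℝ → ℝ} (hf : ContinuousOn f (Ici 0)) {p : ℝ} (hp : 0 ≤ p)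
    (h0 : ∀ x, p < x → f x = 0) :
    muL2 a b ∞ f =
      ENNReal.ofReal (∫ x in (0 : ℝ)..p, f x ^ 2 * (Real.exp (Cf a b x) / a x)) := by
  rw [muL2_eq_lintegral h hf]
  refine lintegral_Ioi_eq hp (fun x hx => by simp [h0 x hx]) (fun x hx => ?_)
    (intervalIntegrable_sq_density h hf hp)
  exact mul_nonneg (sq_nonneg _) (h.density_pos hx.1).le

/-- Rayleigh quotient bound: the normalisation `μ(f²) = 1` in the definition of `λ₀` is removed
by homogeneity. -/
lemma rayleigh {lam : ℝ} (hlam : ENNReal.ofReal lam = lam0 a b ∞)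
    {f : ℝ → ℝ} (hf : C1C ∞ f) {p : ℝ} (hp : 0 ≤ p) (h0 : ∀ x, p < x → f x = 0)
    {A B : ℝ} (hA : 0 < A) (hmu : muL2 a b ∞ f = ENNReal.ofReal A)
    (hD : Dform a b ∞ f = ENNReal.ofReal B) (hB : 0 ≤ B) : lam * A ≤ B := by
  have hc : ContinuousOn f (Ici 0) := by simpa [ccI_top] using hf.1
  set c : ℝ := (√A)⁻¹ with hcdef
  have hc2 : c ^ 2 = A⁻¹ := by rw [hcdef, inv_pow, Real.sq_sqrt hA.le]
  have hderiv : ∀ x ∈ ooI ∞, deriv (fun x => c * f x) x = c * deriv f x := fun x hx =>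
    deriv_const_mul c (hf.2.1 x hx)
  have hle : lam0 a b ∞ ≤ Dform a b ∞ (fun x => c * f x) := by
    refine sInf_le ⟨fun x => c * f x, ⟨hf.1.const_mul c, fun x hx => (hf.2.1 x hx).const_mul c,
      (hf.2.2.const_mul c).congr hderiv⟩, ⟨p, hp, ENNReal.ofReal_lt_top, fun x hx => by
        simp [h0 x hx]⟩, fun hne => absurd rfl hne, ?_, rfl⟩
    have : muL2 a b ∞ (fun x => c * f x) = ENNReal.ofReal (c ^ 2) * muL2 a b ∞ f := by
      rw [muL2, muL2, ← lintegral_const_mul' _ _ ENNReal.ofReal_ne_top]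
      refine lintegral_congr fun x => ?_
      rw [← ENNReal.ofReal_mul (sq_nonneg _), mul_pow]
    rw [this, hmu, hc2, ← ENNReal.ofReal_mul (inv_nonneg.2 hA.le), inv_mul_cancel₀ hA.ne',
      ENNReal.ofReal_one]
  have hDc : Dform a b ∞ (fun x => c * f x) = ENNReal.ofReal (c ^ 2) * Dform a b ∞ f := by
    rw [Dform, Dform, ← lintegral_const_mul' _ _ ENNReal.ofReal_ne_top]
    refine setLIntegral_congr_fun (by rw [ooI_top]; exact measurableSet_Ioi) fun x hx => ?_
    rw [← ENNReal.ofReal_mul (sq_nonneg _), hderiv x hx]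
    congr 1
    ring
  rw [← hlam, hDc, hD, hc2, ← ENNReal.ofReal_mul (inv_nonneg.2 hA.le),
    ENNReal.ofReal_le_ofReal_iff (mul_nonneg (inv_nonneg.2 hA.le) hB)] at hle
  rwa [inv_mul_eq_div, le_div_iff₀ hA] at hle

end Coefficients

/-- Integrated form of the eigenvalue equation with Neumann condition at `0`: with `E = e^C` and
`m = e^C / a`, the flux `E g'` vanishes at `0` and is a primitive of `-λ g m`. -/
structure NeumannSol (E m : ℝ → ℝ) (lam : ℝ) (g g' : ℝ → ℝ) : Prop where
  cont : ContinuousOn g (Ici 0)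
  cont' : ContinuousOn g' (Ici 0)
  hasDeriv : ∀ x, 0 < x → HasDerivAt g (g' x) x
  neumann : g' 0 = 0
  flux : ∀ p, 0 ≤ p → IsPrim 0 p (fun x => E x * g' x) (fun x => -lam * g x * m x)

lemma AEEigenfunction.neumannSol {a b : ℝ → ℝ} (h : Hyp a b ∞) {lam : ℝ} {g g' g'' : ℝ → ℝ}
    (he : AEEigenfunction a b ∞ lam g g' g'') (hN : g' 0 = 0) :
    NeumannSol (fun x => Real.exp (Cf a b x)) (fun x => Real.exp (Cf a b x) / a x) lam g g' := by
  obtain ⟨h1, h2, h3, -, h5, h6, h7⟩ := he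
  rw [coI_top] at h1 h2
  refine ⟨h1, h2, fun x hx => h3 x (by rw [ooI_top]; exact hx), hN, fun p hp => ?_⟩
  have hg' : IsPrim 0 p g' g'' := by
    refine ⟨?_, fun x hx => ?_⟩
    · rw [intervalIntegrable_iff_integrableOn_Icc_of_le hp]
      exact h5 p hp ENNReal.ofReal_lt_top
    · rw [intervalIntegral.integral_of_le hx.1, integral_Ioc_eq_integral_Ioo]
      exact h6 x (by rw [coI_top]; exact hx.1)
  refine (((h.isPrim_Cf hp).exp hp).mul hp hg').congr hp ?_
  rw [ooI_top, ae_restrict_iff' measurableSet_Ioi] at h7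
  filter_upwards [h7] with x hx hx'
  have ha : 0 < a x := h.2.2.1 x (by rw [ooI_top]; exact hx'.1)
  have := hx hx'.1
  have hg : -lam * g x = a x * g'' x + b x * g' x := this.symm
  rw [hg]
  field_simp
  ring

/-! ### Nonnegativity of the eigenfunction -/

/-- Energy estimate for the truncations `(g + s)₊^(1+β)` up to the first point `x₁` where
`g = -s`. With `u = g + s` and `ψ = (1+β)²/(1+2β) · u^(1+2β)`, integrating the
derivative of `E g' · ψ` turns the energy into `λ ∫ g ψ m`, and `g ψ < u^(2+2β)` because `β` is small. -/
lemma NeumannSol.energy_lt {E m : ℝ → ℝ} {lam : ℝ} {g g' : ℝ → ℝ} (hs : NeumannSol E m lam g g')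
    (hE : ContinuousOn E (Ici 0)) (hm : ∀ x, 0 < x → 0 < m x)
    (hmi : ∀ p, 0 ≤ p → IntervalIntegrable m volume 0 p) (hlam : 0 < lam)
    {x₁ s β : ℝ} (hx₁ : 0 < x₁) (hβ : 0 < β) (hgx₁ : g x₁ = -s)
    (hg : ∀ x, 0 ≤ x → x < x₁ → -s < g x)
    (hsm : ∀ x, 0 ≤ x → x < x₁ → β ^ 2 * (g x + s) < s * (1 + β) ^ 2) :
    ∫ x in (0 : ℝ)..x₁, E x * ((1 + β) * (g x + s) ^ β * g' x) ^ 2 <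
      lam * ∫ x in (0 : ℝ)..x₁, ((g x + s) ^ (1 + β)) ^ 2 * m x := by
  have hu : ∀ x ∈ Icc 0 x₁, 0 ≤ g x + s := fun x hx => by
    rcases hx.2.lt_or_eq with h | h
    · linarith [hg x hx.1 h]
    · rw [h, hgx₁]; simp
  have hIcc : uIcc 0 x₁ = Icc 0 x₁ := uIcc_of_le hx₁.le
  have hsub : Icc 0 x₁ ⊆ Ici 0 := Icc_subset_Ici_self
  have hgc := hs.cont.mono hsub
  have hgc' := hs.cont'.mono hsub
  have hEc := hE.mono hsub
  have hpow : ∀ r : ℝ, 0 ≤ r → ContinuousOn (fun x => (g x + s) ^ r) (Icc 0 x₁) := fun r hr =>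
    (hgc.add continuousOn_const).rpow_const fun x _ => Or.inr hr
  set κ : ℝ := (1 + β) ^ 2 / (1 + 2 * β) with hκ
  have hκ' : κ * (1 + 2 * β) = (1 + β) ^ 2 := by rw [hκ]; field_simp
  have hcψ' : ContinuousOn (fun x => (1 + β) ^ 2 * (g x + s) ^ (2 * β) * g' x) (Icc 0 x₁) :=
    (continuousOn_const.mul (hpow _ (by positivity))).mul hgc'
  have hψ : IsPrim 0 x₁ (fun x => κ * (g x + s) ^ (1 + 2 * β))
      (fun x => (1 + β) ^ 2 * (g x + s) ^ (2 * β) * g' x) := by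
    refine IsPrim.of_hasDerivAt hx₁.le (continuousOn_const.mul (hpow _ (by positivity)))
      (fun x hx => ?_) (by rw [← hIcc] at hcψ'; exact hcψ'.intervalIntegrable)
    have h1 := ((hs.hasDeriv x hx.1).add_const s).rpow_const (p := 1 + 2 * β)
      (Or.inr (by linarith))
    have h2 := h1.const_mul κ
    have e : (1 + β) ^ 2 * (g x + s) ^ (2 * β) * g' x =
        κ * (g' x * (1 + 2 * β) * (g x + s) ^ (1 + 2 * β - 1)) := by
      rw [add_sub_cancel_left, ← hκ']; ring
    rw [e]
    exact h2
  have hprod := (hs.flux x₁ hx₁.le).mul hx₁.le hψ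
  have hparts := hprod.eq_sub hx₁.le
  have hzero : (0 : ℝ) ^ (1 + 2 * β) = 0 := Real.zero_rpow (by positivity)
  simp only [hs.neumann, hgx₁, neg_add_cancel, hzero, mul_zero, zero_mul, sub_zero] at hparts
  have hi1 : IntervalIntegrable
      (fun x => -lam * g x * m x * (κ * (g x + s) ^ (1 + 2 * β))) volume 0 x₁ := by
    refine IntervalIntegrable.mul_continuousOn (hs.flux x₁ hx₁.le).1 ?_
    rw [hIcc]
    exact continuousOn_const.mul (hpow _ (by positivity))
  have hi2 : IntervalIntegrable
      (fun x => E x * g' x * ((1 + β) ^ 2 * (g x + s) ^ (2 * β) * g' x)) volume 0 x₁ := by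
    refine ContinuousOn.intervalIntegrable ?_
    rw [hIcc]
    exact (hEc.mul hgc').mul hcψ'
  have hi3 : IntervalIntegrable
      (fun x => lam * (((g x + s) ^ (1 + β)) ^ 2 * m x)) volume 0 x₁ := by
    refine ((hmi x₁ hx₁.le).continuousOn_mul ?_).const_mul lam
    rw [hIcc]
    exact (hpow _ (by positivity)).pow 2
  rw [intervalIntegral.integral_add hi1 hi2] at hparts
  have hL : ∫ x in (0 : ℝ)..x₁, E x * ((1 + β) * (g x + s) ^ β * g' x) ^ 2 =
      ∫ x in (0 : ℝ)..x₁, E x * g' x * ((1 + β) ^ 2 * (g x + s) ^ (2 * β) * g' x) := by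
    refine intervalIntegral.integral_congr fun x hx => ?_
    rw [hIcc] at hx
    have : (g x + s) ^ (2 * β) = ((g x + s) ^ β) ^ 2 := by
      rw [mul_comm, Real.rpow_mul (hu x hx), Real.rpow_two]
    simp only [this]
    ring
  have hpos : 0 < ∫ x in (0 : ℝ)..x₁, (lam * (((g x + s) ^ (1 + β)) ^ 2 * m x) +
      -lam * g x * m x * (κ * (g x + s) ^ (1 + 2 * β))) := by
    refine intervalIntegral.intervalIntegral_pos_of_pos_on (hi3.add hi1) (fun x hx => ?_) hx₁
    have hux : 0 < g x + s := by linarith [hg x hx.1.le hx.2]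
    have h1 : ((g x + s) ^ (1 + β)) ^ 2 = (g x + s) * (g x + s) ^ (1 + 2 * β) := by
      rw [← Real.rpow_two, ← Real.rpow_mul hux.le, ← Real.rpow_one_add' hux.le (by positivity)]
      ring_nf
    have h2 : 0 < (g x + s) - g x * κ := by
      have h3 := hsm x hx.1.le hx.2
      have h4 : (g x + s - g x * κ) * (1 + 2 * β) = s * (1 + β) ^ 2 - β ^ 2 * (g x + s) := by
        rw [sub_mul, mul_assoc, hκ']; ring
      have : 0 < (g x + s - g x * κ) * (1 + 2 * β) := by rw [h4]; linarith
      exact pos_of_mul_pos_left this (by positivity)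
    have h5 : 0 < lam * m x * (g x + s) ^ (1 + 2 * β) * ((g x + s) - g x * κ) :=
      mul_pos (mul_pos (mul_pos hlam (hm x hx.1)) (Real.rpow_pos_of_pos hux _)) h2
    rw [h1]
    linarith
  rw [intervalIntegral.integral_add hi3 hi1, intervalIntegral.integral_const_mul] at hpos
  rw [hL]
  linarith

/-- If `g x₁ = -s`, then `(g + s)^(1+β)`, frozen at its value `0` after `x₁`, stays `C¹`: the
exponent exceeds `1`, so the one-sided derivatives at `x₁` both vanish. -/
lemma C1C_truncation {g g' : ℝ → ℝ} (hc : ContinuousOn g (Ici 0)) (hc' : ContinuousOn g' (Ici 0))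
    (hd : ∀ x, 0 < x → HasDerivAt g (g' x) x) {x₁ s β : ℝ} (hx₁ : 0 < x₁) (hβ : 0 < β)
    (hgx₁ : g x₁ = -s) :
    C1C ∞ (fun x => (g (min x x₁) + s) ^ (1 + β)) ∧
    ∀ x, 0 < x → deriv (fun x => (g (min x x₁) + s) ^ (1 + β)) x =
      (1 + β) * (g (min x x₁) + s) ^ β * g' (min x x₁) := by
  have hmin : ContinuousOn (fun x : ℝ => min x x₁) (Ici 0) := by fun_prop
  have hmaps : MapsTo (fun x : ℝ => min x x₁) (Ici 0) (Ici 0) := fun x hx => le_min hx hx₁.le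
  have hF : ∀ x, 0 < x → HasDerivAt (fun x => (g x + s) ^ (1 + β))
      ((1 + β) * (g x + s) ^ β * g' x) x := fun x hx => by
    have h1 := ((hd x hx).add_const s).rpow_const (p := 1 + β) (Or.inr (by linarith))
    have e : (1 + β) * (g x + s) ^ β * g' x = g' x * (1 + β) * (g x + s) ^ (1 + β - 1) := by
      rw [add_sub_cancel_left]; ring
    rw [e]
    exact h1
  have hz : (0 : ℝ) ^ (1 + β) = 0 := Real.zero_rpow (by positivity)
  have hz' : (0 : ℝ) ^ β = 0 := Real.zero_rpow hβ.ne'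
  have hder : ∀ x, 0 < x → HasDerivAt (fun x => (g (min x x₁) + s) ^ (1 + β))
      ((1 + β) * (g (min x x₁) + s) ^ β * g' (min x x₁)) x := fun x hx => by
    rcases lt_trichotomy x x₁ with h | h | h
    · rw [min_eq_left h.le]
      refine (hF x hx).congr_of_eventuallyEq ?_
      filter_upwards [Iio_mem_nhds h] with y hy
      rw [min_eq_left (le_of_lt hy)]
    · subst h
      rw [min_self, hgx₁]
      simp only [neg_add_cancel, hz', mul_zero, zero_mul]
      have hl : HasDerivWithinAt (fun y => (g (min y x) + s) ^ (1 + β)) 0 (Iic x) x := by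
        have := (hF x hx).hasDerivWithinAt (s := Iic x)
        rw [hgx₁] at this
        simp only [neg_add_cancel, hz', mul_zero, zero_mul] at this
        exact this.congr (fun y hy => by rw [min_eq_left hy]) (by rw [min_self])
      have hr : HasDerivWithinAt (fun y => (g (min y x) + s) ^ (1 + β)) 0 (Ici x) x :=
        (hasDerivWithinAt_const x (Ici x) ((g x + s) ^ (1 + β))).congr
          (fun y hy => by rw [min_eq_right hy]) (by rw [min_self])
      have := hl.union hr
      rwa [Iic_union_Ici, hasDerivWithinAt_univ] at this
    · rw [min_eq_right h.le, hgx₁]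
      simp only [neg_add_cancel, hz', mul_zero, zero_mul]
      refine (hasDerivAt_const x ((g x₁ + s) ^ (1 + β))).congr_of_eventuallyEq ?_
      filter_upwards [Ioi_mem_nhds h] with y hy
      rw [min_eq_right (le_of_lt hy)]
  have hgm : ContinuousOn (fun x => g (min x x₁) + s) (Ici 0) :=
    (hc.comp hmin hmaps).add continuousOn_const
  refine ⟨⟨?_, ?_, ?_⟩, fun x hx => (hder x hx).deriv⟩
  · rw [ccI_top]
    exact hgm.rpow_const fun x _ => Or.inr (by linarith)
  · rw [ooI_top]
    exact fun x hx => (hder x hx).differentiableAt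
  · rw [ooI_top]
    have : ContinuousOn (fun x => (1 + β) * (g (min x x₁) + s) ^ β * g' (min x x₁)) (Ioi 0) :=
      ((continuousOn_const.mul (hgm.rpow_const fun x _ => Or.inr hβ.le)).mul
        (hc'.comp hmin hmaps)).mono Ioi_subset_Ici_self
    exact this.congr fun x hx => (hder x hx).deriv

/-- A Neumann eigenfunction of `λ₀` that starts nonnegative stays nonnegative; otherwise a
truncation of it would have Rayleigh quotient below `λ₀`. -/
lemma NeumannSol.nonneg {a b : ℝ → ℝ} (h : Hyp a b ∞) {lam : ℝ}
    (hlam : ENNReal.ofReal lam = lam0 a b ∞) (hpos : 0 < lam) {g g' : ℝ → ℝ}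
    (hs : NeumannSol (fun x => Real.exp (Cf a b x)) (fun x => Real.exp (Cf a b x) / a x) lam g g')
    (h0 : 0 ≤ g 0) : ∀ x, 0 ≤ x → 0 ≤ g x := by
  intro y hy
  by_contra! hneg
  obtain ⟨s, hsdef⟩ : ∃ s, s = -g y := ⟨_, rfl⟩
  have hs0 : 0 < s := by linarith
  have hcy : ContinuousOn g (Icc 0 y) := hs.cont.mono Icc_subset_Ici_self
  obtain ⟨x₁, ⟨hx₁mem, hgx₁⟩, hleast⟩ : ∃ x, IsLeast (Icc 0 y ∩ g ⁻¹' {-s}) x :=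
    (isCompact_Icc.of_isClosed_subset (hcy.preimage_isClosed_of_isClosed isClosed_Icc
      isClosed_singleton) inter_subset_left).exists_isLeast
      ⟨y, ⟨hy, le_rfl⟩, by simp [hsdef]⟩
  have hgx₁ : g x₁ = -s := hgx₁
  have hx₁ : 0 < x₁ := hx₁mem.1.lt_of_ne fun h' => by rw [← h'] at hgx₁; linarith
  have hfirst : ∀ x, 0 ≤ x → x < x₁ → -s < g x := by
    intro x hx hxx
    by_contra! hle
    obtain ⟨z, hz, hgz⟩ := intermediate_value_Icc' hx
      (hs.cont.mono Icc_subset_Ici_self) (show -s ∈ Icc (g x) (g 0) from ⟨hle, by linarith⟩)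
    have := hleast ⟨⟨hz.1, hz.2.trans (hxx.le.trans hx₁mem.2)⟩, hgz⟩
    linarith [hz.2]
  obtain ⟨M, hM⟩ := (isCompact_Icc (a := (0 : ℝ)) (b := x₁)).bddAbove_image
    (hs.cont.mono Icc_subset_Ici_self)
  have hM' : ∀ x, 0 ≤ x → x < x₁ → g x ≤ M := fun x hx hx' =>
    hM ⟨x, ⟨hx, hx'.le⟩, rfl⟩
  have hM0 : 0 ≤ M := h0.trans (hM' 0 le_rfl hx₁)
  -- `β` is chosen so that `β² (M + s) ≤ β s < s (1 + β)²`.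
  obtain ⟨β, hβdef⟩ : ∃ β, β = s / (M + s) := ⟨_, rfl⟩
  have hβ : 0 < β := by rw [hβdef]; positivity
  have hβM : β * (M + s) = s := by rw [hβdef]; field_simp
  have hsm : ∀ x, 0 ≤ x → x < x₁ → β ^ 2 * (g x + s) < s * (1 + β) ^ 2 := by
    intro x hx hxx
    have h1 : β ^ 2 * (g x + s) ≤ β ^ 2 * (M + s) := by
      gcongr
      exact hM' x hx hxx
    have h2 : β ^ 2 * (M + s) = β * s := by rw [pow_two, mul_assoc, hβM]
    nlinarith [mul_pos hs0 hβ, mul_pos hs0 (mul_pos hβ hβ)]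
  have hlt := hs.energy_lt h.continuousOn_exp (fun x => h.density_pos)
    (fun p => h.intervalIntegrable_density) hpos hx₁ hβ hgx₁ hfirst hsm
  obtain ⟨hC, hder⟩ := C1C_truncation hs.cont hs.cont' hs.hasDeriv hx₁ hβ hgx₁
  have hz : (0 : ℝ) ^ (1 + β) = 0 := Real.zero_rpow (by positivity)
  have hz' : (0 : ℝ) ^ β = 0 := Real.zero_rpow hβ.ne'
  have hvan : ∀ x, x₁ < x → (g (min x x₁) + s) ^ (1 + β) = 0 := fun x hx => by
    rw [min_eq_right hx.le, hgx₁, neg_add_cancel, hz]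
  have hIcc : uIcc 0 x₁ = Icc 0 x₁ := uIcc_of_le hx₁.le
  have hcF : ContinuousOn (fun x => (g (min x x₁) + s) ^ (1 + β)) (Ici 0) := by
    simpa [ccI_top] using hC.1
  have hmu := muL2_eq h hcF hx₁.le hvan
  have hmu' : ∫ x in (0 : ℝ)..x₁,
        ((g (min x x₁) + s) ^ (1 + β)) ^ 2 * (Real.exp (Cf a b x) / a x) =
      ∫ x in (0 : ℝ)..x₁, ((g x + s) ^ (1 + β)) ^ 2 * (Real.exp (Cf a b x) / a x) := by
    refine intervalIntegral.integral_congr fun x hx => ?_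
    rw [hIcc] at hx
    simp only [min_eq_left hx.2]
  rw [hmu'] at hmu
  have hA : 0 < ∫ x in (0 : ℝ)..x₁,
      ((g x + s) ^ (1 + β)) ^ 2 * (Real.exp (Cf a b x) / a x) := by
    refine intervalIntegral.intervalIntegral_pos_of_pos_on ?_ (fun x hx => ?_) hx₁
    · refine (intervalIntegrable_sq_density h hcF hx₁.le).congr fun x hx => ?_
      rw [uIoc_of_le hx₁.le] at hx
      simp only [min_eq_left hx.2]
    · have : 0 < g x + s := by linarith [hfirst x hx.1.le hx.2]
      exact mul_pos (pow_pos (Real.rpow_pos_of_pos this _) 2) (h.density_pos hx.1)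
  have hD : Dform a b ∞ (fun x => (g (min x x₁) + s) ^ (1 + β)) = ENNReal.ofReal
      (∫ x in (0 : ℝ)..x₁, Real.exp (Cf a b x) * ((1 + β) * (g x + s) ^ β * g' x) ^ 2) := by
    rw [Dform, ooI_top, setLIntegral_congr_fun measurableSet_Ioi
      (g := fun x => ENNReal.ofReal (Real.exp (Cf a b x) *
        ((1 + β) * (g (min x x₁) + s) ^ β * g' (min x x₁)) ^ 2))
      (fun x hx => by simp only [hder x hx]), lintegral_Ioi_eq hx₁.le]
    · congr 1
      refine intervalIntegral.integral_congr fun x hx => ?_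
      rw [hIcc] at hx
      simp only [min_eq_left hx.2]
    · intro x hx
      rw [min_eq_right hx.le, hgx₁, neg_add_cancel, hz']
      simp
    · exact fun x _ => mul_nonneg (Real.exp_pos _).le (sq_nonneg _)
    · have hc : ContinuousOn (fun x => Real.exp (Cf a b x) *
          ((1 + β) * (g x + s) ^ β * g' x) ^ 2) (uIcc 0 x₁) := by
        rw [hIcc]
        refine (h.continuousOn_exp.mul (((continuousOn_const.mul
          ((hs.cont.add continuousOn_const).rpow_const fun x _ => Or.inr hβ.le)).mul
          hs.cont').pow 2)).mono Icc_subset_Ici_self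
      refine (hc.congr fun x hx => ?_).intervalIntegrable
      rw [hIcc] at hx
      simp only [min_eq_left hx.2]
  have hB : 0 ≤ ∫ x in (0 : ℝ)..x₁,
      Real.exp (Cf a b x) * ((1 + β) * (g x + s) ^ β * g' x) ^ 2 :=
    intervalIntegral.integral_nonneg hx₁.le fun x _ =>
      mul_nonneg (Real.exp_pos _).le (sq_nonneg _)
  have hge := rayleigh hlam hC hx₁.le hvan hA hmu hD hB
  linarith

/-! ### Supersolutions and the limit at infinity -/

/-- Picone's identity on `[e, q]`, with `k = g - c` in the role of the positive supersolution: the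
square completed in `E f'² - E g' (f²/k)' = E (f' - f g'/k)²` gives the bound, and the boundary
term at `e` has the right sign since `g' ≤ 0`. -/
lemma NeumannSol.picone {E m : ℝ → ℝ} {lam : ℝ} {g g' : ℝ → ℝ} (hs : NeumannSol E m lam g g')
    (hE : ContinuousOn E (Ici 0)) (hE0 : ∀ x, 0 ≤ E x)
    (hg' : ∀ x, 0 ≤ x → g' x ≤ 0) {c : ℝ} (hk : ∀ x, 0 ≤ x → 0 < g x - c)
    {f f' : ℝ → ℝ} (hf : ContinuousOn f (Ici 0)) (hf' : ∀ x, 0 < x → HasDerivAt f (f' x) x)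
    (hfc : ContinuousOn f' (Ioi 0)) {e q : ℝ} (he : 0 < e) (heq : e ≤ q) (hfq : f q = 0) :
    ∫ x in e..q, lam * g x * m x * (f x ^ 2 / (g x - c)) ≤ ∫ x in e..q, E x * f' x ^ 2 := by
  have hIcc : uIcc e q = Icc e q := uIcc_of_le heq
  have hs0 : Icc e q ⊆ Ici 0 := fun x hx => he.le.trans hx.1
  have hs1 : Icc e q ⊆ Ioi 0 := fun x hx => he.trans_le hx.1
  have hgc := hs.cont.mono hs0
  have hgc' := hs.cont'.mono hs0
  have hEc := hE.mono hs0
  have hfc0 := hf.mono hs0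
  have hfc1 := hfc.mono hs1
  have hkc : ContinuousOn (fun x => g x - c) (Icc e q) := hgc.sub continuousOn_const
  have hk0 : ∀ x ∈ Icc e q, g x - c ≠ 0 := fun x hx => (hk x (hs0 hx)).ne'
  have hPc : ContinuousOn (fun x => f x ^ 2 / (g x - c)) (Icc e q) := (hfc0.pow 2).div hkc hk0
  have hP'c : ContinuousOn
      (fun x => (2 * f x * f' x * (g x - c) - f x ^ 2 * g' x) / (g x - c) ^ 2) (Icc e q) :=
    ((((continuousOn_const.mul hfc0).mul hfc1).mul hkc).sub ((hfc0.pow 2).mul hgc')).div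
      (hkc.pow 2) fun x hx => pow_ne_zero 2 (hk0 x hx)
  have hP : IsPrim e q (fun x => f x ^ 2 / (g x - c))
      (fun x => (2 * f x * f' x * (g x - c) - f x ^ 2 * g' x) / (g x - c) ^ 2) := by
    refine IsPrim.of_hasDerivAt heq hPc (fun x hx => ?_)
      (by rw [← hIcc] at hP'c; exact hP'c.intervalIntegrable)
    have hx0 : 0 < x := he.trans hx.1
    have h1 := ((hf' x hx0).pow 2).div ((hs.hasDeriv x hx0).sub_const c) (hk x hx0.le).ne'
    simp only [Nat.cast_ofNat, Nat.add_one_sub_one, pow_one] at h1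
    exact h1
  have hV := (hs.flux q (he.le.trans heq)).mono_left ⟨he.le, heq⟩
  have hparts := (hV.mul heq hP).eq_sub heq
  have hi1 : IntervalIntegrable
      (fun x => -lam * g x * m x * (f x ^ 2 / (g x - c))) volume e q := by
    refine hV.1.mul_continuousOn ?_
    rwa [hIcc]
  have hc2 : ContinuousOn (fun x => E x * g' x *
      ((2 * f x * f' x * (g x - c) - f x ^ 2 * g' x) / (g x - c) ^ 2)) (Icc e q) :=
    (hEc.mul hgc').mul hP'c
  have hi2 : IntervalIntegrable (fun x => E x * g' x *
      ((2 * f x * f' x * (g x - c) - f x ^ 2 * g' x) / (g x - c) ^ 2)) volume e q := by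
    rw [← hIcc] at hc2; exact hc2.intervalIntegrable
  have hi3 : IntervalIntegrable (fun x => E x * f' x ^ 2) volume e q := by
    refine ContinuousOn.intervalIntegrable ?_
    rw [hIcc]
    exact hEc.mul (hfc1.pow 2)
  rw [intervalIntegral.integral_add hi1 hi2, hfq] at hparts
  have hbd : E e * g' e * (f e ^ 2 / (g e - c)) ≤ 0 :=
    mul_nonpos_of_nonpos_of_nonneg (mul_nonpos_of_nonneg_of_nonpos (hE0 e) (hg' e he.le))
      (div_nonneg (sq_nonneg _) (hk e he.le).le)
  have hle : ∫ x in e..q, E x * g' x *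
      ((2 * f x * f' x * (g x - c) - f x ^ 2 * g' x) / (g x - c) ^ 2) ≤
      ∫ x in e..q, E x * f' x ^ 2 := by
    refine intervalIntegral.integral_mono_on heq hi2 hi3 fun x hx => ?_
    have hne := hk0 x hx
    have key : E x * f' x ^ 2 - E x * g' x *
        ((2 * f x * f' x * (g x - c) - f x ^ 2 * g' x) / (g x - c) ^ 2) =
        E x * (f' x - f x * g' x / (g x - c)) ^ 2 := by
      field_simp
      ring
    have := mul_nonneg (hE0 x) (sq_nonneg (f' x - f x * g' x / (g x - c)))
    linarith
  have hneg : ∫ x in e..q, -lam * g x * m x * (f x ^ 2 / (g x - c)) =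
      -∫ x in e..q, lam * g x * m x * (f x ^ 2 / (g x - c)) := by
    rw [← intervalIntegral.integral_neg]
    exact intervalIntegral.integral_congr fun x _ => by ring
  rw [hneg] at hparts
  simp only [ne_eq, OfNat.ofNat_ne_zero, not_false_eq_true, zero_pow, zero_div, mul_zero,
    zero_sub] at hparts
  linarith

/-- Barta-type lower bound: if an eigenfunction stays in `[L, g 0]` with `L > 0`, then
`g - L / 2` is a supersolution for the larger value `λ g(0) / (g(0) - L / 2)`. -/
lemma NeumannSol.barta {a b : ℝ → ℝ} (h : Hyp a b ∞) {lam : ℝ} (hpos : 0 < lam) {g g' : ℝ → ℝ}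
    (hs : NeumannSol (fun x => Real.exp (Cf a b x)) (fun x => Real.exp (Cf a b x) / a x) lam g g')
    (hg' : ∀ x, 0 ≤ x → g' x ≤ 0) {L : ℝ} (hL : 0 < L) (hgL : ∀ x, 0 ≤ x → L ≤ g x)
    (hg0 : ∀ x, 0 ≤ x → g x ≤ g 0) :
    ENNReal.ofReal (lam * (g 0 / (g 0 - L / 2))) ≤ lam0 a b ∞ := by
  refine le_sInf ?_
  rintro r ⟨f, hfC, ⟨p, hp, -, hfp⟩, -, hmu, rfl⟩
  have hf : ContinuousOn f (Ici 0) := by simpa [ccI_top] using hfC.1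
  have hf' : ∀ x, 0 < x → HasDerivAt f (deriv f x) x := fun x hx =>
    (hfC.2.1 x (by rw [ooI_top]; exact hx)).hasDerivAt
  have hfc : ContinuousOn (deriv f) (Ioi 0) := by simpa [ooI_top] using hfC.2.2
  -- One unit beyond `p`, so that `f q = 0`.
  obtain ⟨q, hq⟩ : ∃ q, q = p + 1 := ⟨_, rfl⟩
  have hq0 : 0 < q := by linarith
  have hfq : f q = 0 := hfp q (by linarith)
  have hint := intervalIntegrable_sq_density h hf hq0.le
  rw [muL2_eq h hf hq0.le fun x hx => hfp x (by linarith), ENNReal.ofReal_eq_one] at hmu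
  have hgL0 := hgL 0 le_rfl
  have hk : ∀ x, 0 ≤ x → 0 < g x - L / 2 := fun x hx => by linarith [hgL x hx]
  set Λ : ℝ := lam * (g 0 / (g 0 - L / 2)) with hΛ
  have hstep : ∀ e ∈ Ioo 0 q, ENNReal.ofReal
      (Λ * ∫ x in e..q, f x ^ 2 * (Real.exp (Cf a b x) / a x)) ≤ Dform a b ∞ f := by
    intro e he
    have hpic := hs.picone h.continuousOn_exp (fun x => (Real.exp_pos _).le) hg' hk hf hf' hfc
      he.1 he.2.le hfq
    have hsub : Icc e q ⊆ Ioi 0 := fun x hx => he.1.trans_le hx.1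
    have hsub' : Icc e q ⊆ Ici 0 := hsub.trans Ioi_subset_Ici_self
    have hIcc : uIcc e q = Icc e q := uIcc_of_le he.2.le
    have hsubq : uIcc e q ⊆ uIcc 0 q := by
      rw [hIcc, uIcc_of_le hq0.le]; exact Icc_subset_Icc_left he.1.le
    have hmono : ∫ x in e..q, Λ * (f x ^ 2 * (Real.exp (Cf a b x) / a x)) ≤
        ∫ x in e..q, lam * g x * (Real.exp (Cf a b x) / a x) * (f x ^ 2 / (g x - L / 2)) := by
      refine intervalIntegral.integral_mono_on he.2.le
        ((hint.mono_set hsubq).const_mul Λ) ?_ fun x hx => ?_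
      · have hi := ((h.intervalIntegrable_density hq0.le).mono_set hsubq).mul_continuousOn
          (g := fun x => lam * g x * (f x ^ 2 / (g x - L / 2))) (by
            rw [hIcc]
            have hgc := hs.cont.mono hsub'
            exact (continuousOn_const.mul hgc).mul (((hf.mono hsub').pow 2).div
              (hgc.sub continuousOn_const) fun x hx => (hk x (hsub' hx)).ne'))
        refine hi.congr fun x _ => ?_
        ring
      · have hx0 : 0 ≤ x := hsub' hx
        have hratio : g 0 / (g 0 - L / 2) ≤ g x / (g x - L / 2) := by
          rw [div_le_div_iff₀ (hk 0 le_rfl) (hk x hx0)]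
          nlinarith [hg0 x hx0]
        have hnn : 0 ≤ lam * (f x ^ 2 * (Real.exp (Cf a b x) / a x)) :=
          mul_nonneg hpos.le (mul_nonneg (sq_nonneg _) (h.density_pos (hsub hx)).le)
        have h1 := mul_le_mul_of_nonneg_left hratio hnn
        calc Λ * (f x ^ 2 * (Real.exp (Cf a b x) / a x))
            = lam * (f x ^ 2 * (Real.exp (Cf a b x) / a x)) * (g 0 / (g 0 - L / 2)) := by
              rw [hΛ]; ring
          _ ≤ _ := h1
          _ = _ := by ring
    rw [intervalIntegral.integral_const_mul] at hmono
    refine (ENNReal.ofReal_le_ofReal (hmono.trans hpic)).trans ?_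
    rw [Dform, ooI_top]
    refine le_lintegral_Ioi he.1.le he.2.le
      (fun x _ => mul_nonneg (Real.exp_pos _).le (sq_nonneg _)) ?_
    refine ContinuousOn.intervalIntegrable ?_
    rw [hIcc]
    exact (h.continuousOn_exp.mono hsub').mul ((hfc.mono hsub).pow 2)
  have hlim : Tendsto (fun e => ENNReal.ofReal
      (Λ * ∫ x in e..q, f x ^ 2 * (Real.exp (Cf a b x) / a x))) (𝓝[>] 0)
      (𝓝 (ENNReal.ofReal Λ)) := by
    have hc : ContinuousOn (fun e => ∫ x in e..q, f x ^ 2 * (Real.exp (Cf a b x) / a x))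
        (uIcc q 0) := by
      have := (intervalIntegral.continuousOn_primitive_interval' hint.symm left_mem_uIcc).neg
      refine this.congr fun e _ => ?_
      simp only [Pi.neg_apply]
      rw [intervalIntegral.integral_symm]
    have h0 := hc 0 right_mem_uIcc
    rw [uIcc_of_ge hq0.le] at h0
    have h1 : Tendsto (fun e => ∫ x in e..q, f x ^ 2 * (Real.exp (Cf a b x) / a x))
        (𝓝[>] 0) (𝓝 1) := by
      rw [← hmu]
      refine h0.tendsto.mono_left (nhdsWithin_le_of_mem ?_)
      exact mem_of_superset (Ioo_mem_nhdsGT hq0) Ioo_subset_Icc_self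
    have h2 := ENNReal.tendsto_ofReal (h1.const_mul Λ)
    rwa [mul_one] at h2
  refine le_of_tendsto hlim ?_
  filter_upwards [Ioo_mem_nhdsGT hq0] with e he using hstep e he

/-- A nonnegative eigenfunction is decreasing, because its flux is nonpositive, so it has a limit
`L ≥ 0`; the lower bound `barta` shows that `L > 0` is incompatible with `λ = λ₀`. -/
lemma NeumannSol.tendsto_zero {a b : ℝ → ℝ} (h : Hyp a b ∞) {lam : ℝ}
    (hlam : ENNReal.ofReal lam = lam0 a b ∞) (hpos : 0 < lam) {g g' : ℝ → ℝ}
    (hs : NeumannSol (fun x => Real.exp (Cf a b x)) (fun x => Real.exp (Cf a b x) / a x) lam g g')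
    (h0 : 0 ≤ g 0) : Tendsto g atTop (𝓝 0) := by
  have hnn := hs.nonneg h hlam hpos h0
  have hg' : ∀ x, 0 ≤ x → g' x ≤ 0 := by
    intro x hx
    have hV := (hs.flux x hx).2 x ⟨hx, le_rfl⟩
    simp only [hs.neumann, mul_zero, zero_add] at hV
    have hle : ∫ t in (0 : ℝ)..x, -lam * g t * (Real.exp (Cf a b t) / a t) ≤ 0 := by
      rw [intervalIntegral.integral_of_le hx]
      refine setIntegral_nonpos measurableSet_Ioc fun t ht => ?_
      have := mul_nonneg (mul_nonneg hpos.le (hnn t ht.1.le)) (h.density_pos ht.1).le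
      linarith
    rw [← hV] at hle
    exact nonpos_of_mul_nonpos_right hle (Real.exp_pos _)
  have hanti : AntitoneOn g (Ici 0) := by
    refine antitoneOn_of_deriv_nonpos (convex_Ici 0) hs.cont ?_ ?_
    · rw [interior_Ici]
      exact fun x hx => (hs.hasDeriv x hx).differentiableAt.differentiableWithinAt
    · rw [interior_Ici]
      intro x hx
      rw [(hs.hasDeriv x hx).deriv]
      exact hg' x (le_of_lt hx)
  have hG : Antitone fun x => g (max x 0) := fun x y hxy =>
    hanti (le_max_right x 0) (le_max_right y 0) (max_le_max_right 0 hxy)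
  have hbdd : BddBelow (range fun x => g (max x 0)) :=
    ⟨0, by rintro _ ⟨x, rfl⟩; exact hnn _ (le_max_right x 0)⟩
  obtain ⟨L, hLdef⟩ : ∃ L, L = ⨅ x, g (max x 0) := ⟨_, rfl⟩
  have hlim := tendsto_atTop_ciInf hG hbdd
  rw [← hLdef] at hlim
  have hgL : ∀ x, 0 ≤ x → L ≤ g x := fun x hx => by
    have := ciInf_le hbdd x
    rw [max_eq_left hx] at this
    rwa [hLdef]
  have hL0 : 0 ≤ L := hLdef ▸ le_ciInf fun x => hnn _ (le_max_right x 0)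
  have hL : L = 0 := by
    by_contra hne
    have hLpos : 0 < L := hL0.lt_of_ne (Ne.symm hne)
    have hbar := hs.barta h hpos hg' hLpos hgL fun x hx => hanti self_mem_Ici hx hx
    rw [← hlam, ENNReal.ofReal_le_ofReal_iff hpos.le] at hbar
    have hgL0 := hgL 0 le_rfl
    have : 1 < g 0 / (g 0 - L / 2) := by
      rw [one_lt_div (by linarith)]; linarith
    nlinarith
  rw [← hL]
  refine hlim.congr' ?_
  filter_upwards [eventually_ge_atTop 0] with x hx
  rw [max_eq_left hx]

lemma NeumannSol.neg {E m : ℝ → ℝ} {lam : ℝ} {g g' : ℝ → ℝ} (hs : NeumannSol E m lam g g') :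
    NeumannSol E m lam (fun x => -g x) (fun x => -g' x) := by
  refine ⟨hs.cont.neg, hs.cont'.neg, fun x hx => (hs.hasDeriv x hx).neg, by simp [hs.neumann],
    fun p hp => ?_⟩
  obtain ⟨h1, h2⟩ := hs.flux p hp
  refine ⟨h1.neg.congr fun x _ => by simp, fun x hx => ?_⟩
  have e : (fun t => -lam * -g t * m t) = fun t => -(-lam * g t * m t) := by
    funext t; ring
  have := h2 x hx
  rw [e, intervalIntegral.integral_neg]
  linarith

/-- Lemma 3.6: for `D = ∞`, if `λ₀ > 0` then any non-zero a.e. eigenfunction of `λ₀`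
with Neumann boundary at `0` vanishes at infinity. -/
theorem nd_eigenfunction_vanishes_at_infinity
    (a b : ℝ → ℝ) (hyp : Hyp a b ∞)
    (lam : ℝ) (hlam : ENNReal.ofReal lam = lam0 a b ∞) (hpos : 0 < lam)
    (g g' g'' : ℝ → ℝ) (heig : AEEigenfunction a b ∞ lam g g' g'')
    (hnz : ¬∀ x ∈ coI ∞, g x = 0)
    (hNeumann : g' 0 = 0) :
    Tendsto g atTop (nhds 0) := by
  have hs := heig.neumannSol hyp hNeumann
  rcases le_total 0 (g 0) with h0 | h0
  · exact hs.tendsto_zero hyp hlam hpos h0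
  · simpa using (hs.neg.tendsto_zero hyp hlam hpos (by linarith)).neg
end
end

section
/- Given two nonnegative, measurable, locally integrable functions m and n on [0,D], suppose ∫₀^D n(y)dy < ∞ and c := sup_{x∈(0,D)} (∫₀ˣ m(y)dy)·(∫ₓ^D n(y)dy) < ∞. Set ψ(x) = ∫ₓ^D n(y)dy. Then for every r ∈ (0,1) and every x ∈ (0,D): ∫₀ˣ m(y) ψ(y)^r dy ≤ (c/(1−r)) ψ(x)^{r−1}. -/
/-!
The proof writes `ψ^r` through its level sets. With `dμ = m dy` on `(0, x)`, the layer-cake formula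
gives `∫ ψ^r dμ = r ∫_0^∞ s^(r-1) μ{ψ > s} ds`. Since `ψ` is antitone, `{ψ > s}` is an initial
interval, up to its right endpoint the increasing union of countably many intervals `(0, y)` with
`ψ(y) > s`, and each of these has mass at most
`c / ψ(y) ≤ c / s`; hence `μ{ψ > s} ≤ c / s` (`measure_level_le`). Also
`μ{ψ > s} ≤ μ(0, x) ≤ c / ψ(x)`. Using the second bound for `s ≤ ψ(x)` and the first one
for `s > ψ(x)`, the integral is at most
`c ψ(x)^(r-1) + c r/(1-r) ψ(x)^(r-1) = c/(1-r) ψ(x)^(r-1)`.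
If `ψ(x) = 0`, the right-hand side is infinite unless `c = 0`, and then the bound `c / s` alone
shows that the left-hand side vanishes.
-/

open MeasureTheory Set Filter Topology ENNReal

noncomputable section

/-- The interval `(x, D)` in `ℝ`. -/
def tailI (D : ℝ≥0∞) (x : ℝ) : Set ℝ := {y : ℝ | x < y ∧ ENNReal.ofReal y < D}

/-- `ψ(x) = ∫_x^D n(y) dy`, valued in `ℝ≥0∞`. -/
def psiI (D : ℝ≥0∞) (n : ℝ → ℝ) (x : ℝ) : ℝ≥0∞ :=
  ∫⁻ y in tailI D x, ENNReal.ofReal (n y)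

/-- `c = sup_{x ∈ (0,D)} (∫_0^x m)(∫_x^D n)`. -/
def cI (D : ℝ≥0∞) (m n : ℝ → ℝ) : ℝ≥0∞ :=
  ⨆ x ∈ ooI D, (∫⁻ y in Set.Ioo 0 x, ENNReal.ofReal (m y)) * psiI D n x

/-- The measure `m(y) dy` on the interval `(0, x)`. -/
def muI (m : ℝ → ℝ) (x : ℝ) : Measure ℝ :=
  (volume.restrict (Ioo 0 x)).withDensity fun y => ENNReal.ofReal (m y)

lemma psiI_antitone (D : ℝ≥0∞) (n : ℝ → ℝ) : Antitone (psiI D n) := fun _ _ hab =>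
  lintegral_mono_set fun _ hy => ⟨hab.trans_lt hy.1, hy.2⟩

lemma psiI_ne_top {D : ℝ≥0∞} {n : ℝ → ℝ}
    (hnfin : (∫⁻ y in ooI D, ENNReal.ofReal (n y)) < ∞) {y : ℝ} (hy : 0 < y) :
    psiI D n y ≠ ∞ :=
  have hsub : tailI D y ⊆ ooI D := fun _ hz => ⟨hy.trans hz.1, hz.2⟩
  ((lintegral_mono_set hsub).trans_lt hnfin).ne

lemma mass_mul_psiI_le {D : ℝ≥0∞} {m n : ℝ → ℝ} {y : ℝ} (hy : y ∈ ooI D) :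
    (∫⁻ z in Ioo 0 y, ENNReal.ofReal (m z)) * psiI D n y ≤ cI D m n :=
  le_iSup₂ (f := fun x (_ : x ∈ ooI D) =>
    (∫⁻ y in Ioo 0 x, ENNReal.ofReal (m y)) * psiI D n x) y hy

lemma muI_Ioo_le (m : ℝ → ℝ) (x y : ℝ) :
    muI m x (Ioo 0 y) ≤ ∫⁻ z in Ioo 0 y, ENNReal.ofReal (m z) := by
  rw [muI, withDensity_apply _ measurableSet_Ioo, Measure.restrict_restrict measurableSet_Ioo]
  exact lintegral_mono_set inter_subset_left

/-- Weak-type bound for the level sets of `ψ`. No continuity of `ψ` is needed: an increasing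
sequence in the level set tending to its supremum exhausts it up to one point, which is null. -/
lemma measure_level_le {D : ℝ≥0∞} {m n : ℝ → ℝ}
    (hnfin : (∫⁻ y in ooI D, ENNReal.ofReal (n y)) < ∞)
    {x : ℝ} (hx : x ∈ ooI D) {s : ℝ} (hs : 0 < s) :
    muI m x {y | s < (psiI D n y).toReal} ≤ cI D m n / ENNReal.ofReal s := by
  set S : Set ℝ := {y | s < (psiI D n y).toReal} ∩ Ioo 0 x with hS
  have h1 : muI m x {y | s < (psiI D n y).toReal} ≤ muI m x S := by
    have h0 : muI m x (Ioo 0 x)ᶜ = 0 := by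
      apply withDensity_absolutelyContinuous
      rw [Measure.restrict_apply measurableSet_Ioo.compl]
      simp
    calc _ ≤ muI m x (S ∪ (Ioo 0 x)ᶜ) := by
            apply measure_mono
            intro y hy
            by_cases h : y ∈ Ioo 0 x
            · exact Or.inl ⟨hy, h⟩
            · exact Or.inr h
      _ ≤ muI m x S + muI m x (Ioo 0 x)ᶜ := measure_union_le _ _
      _ = _ := by rw [h0, add_zero]
  refine h1.trans ?_
  rcases S.eq_empty_or_nonempty with he | hne
  · simp [he]
  have hbdd : BddAbove S := ⟨x, fun y hy => hy.2.2.le⟩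
  obtain ⟨u, humono, hutend, huS⟩ := exists_seq_tendsto_sSup hne hbdd
  have hsub : S ⊆ (⋃ k, Ioo 0 (u k)) ∪ {sSup S} := by
    intro y hy
    rcases (le_csSup hbdd hy).lt_or_eq with hlt | heq
    · obtain ⟨k, hk⟩ := (hutend.eventually (lt_mem_nhds hlt)).exists
      exact Or.inl (mem_iUnion.2 ⟨k, hy.2.1, hk⟩)
    · exact Or.inr heq
  have hat : muI m x {sSup S} = 0 := by
    apply withDensity_absolutelyContinuous
    simp
  have hmon : Monotone fun k => Ioo (0 : ℝ) (u k) := fun i j hij =>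
    Ioo_subset_Ioo_right (humono hij)
  calc muI m x S ≤ muI m x (⋃ k, Ioo 0 (u k)) + muI m x {sSup S} :=
        (measure_mono hsub).trans (measure_union_le _ _)
    _ = ⨆ k, muI m x (Ioo 0 (u k)) := by rw [hat, add_zero, hmon.measure_iUnion]
    _ ≤ cI D m n / ENNReal.ofReal s := by
      refine iSup_le fun k => ?_
      have hk := huS k
      have hkD : u k ∈ ooI D :=
        ⟨hk.2.1, (ENNReal.ofReal_le_ofReal hk.2.2.le).trans_lt hx.2⟩
      rw [ENNReal.le_div_iff_mul_le (Or.inl (by simpa using hs)) (Or.inl ofReal_ne_top)]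
      calc _ ≤ (∫⁻ z in Ioo 0 (u k), ENNReal.ofReal (m z)) * psiI D n (u k) := by
            gcongr
            · exact muI_Ioo_le m x _
            · exact (ENNReal.ofReal_le_iff_le_toReal (psiI_ne_top hnfin hk.2.1)).2 (le_of_lt hk.1)
        _ ≤ _ := mass_mul_psiI_le hkD

/-- The layer-cake formula for `∫_0^x m ψ^r`. Passing to `toReal` is harmless because `ψ` is
finite on `(0, ∞)`, although it may be infinite on the negative axis. -/
lemma lintegral_eq_layer {D : ℝ≥0∞} {m n : ℝ → ℝ} (hm : Measurable m)
    (hnfin : (∫⁻ y in ooI D, ENNReal.ofReal (n y)) < ∞) {r : ℝ} (hr : 0 < r) (x : ℝ) :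
    (∫⁻ y in Ioo 0 x, ENNReal.ofReal (m y) * psiI D n y ^ r) =
      ENNReal.ofReal r * ∫⁻ s in Ioi (0 : ℝ),
        muI m x {y | s < (psiI D n y).toReal} * ENNReal.ofReal (s ^ (r - 1)) := by
  have hmeas : Measurable fun y => (psiI D n y).toReal :=
    (psiI_antitone D n).measurable.ennreal_toReal
  rw [← lintegral_rpow_eq_lintegral_meas_lt_mul (muI m x)
    (Eventually.of_forall fun _ => toReal_nonneg) hmeas.aemeasurable hr, muI,
    lintegral_withDensity_eq_lintegral_mul _ hm.ennreal_ofReal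
      (hmeas.pow_const r).ennreal_ofReal]
  refine setLIntegral_congr_fun measurableSet_Ioo fun y hy => ?_
  simp only [Pi.mul_apply]
  rw [← ENNReal.ofReal_rpow_of_nonneg toReal_nonneg hr.le,
    ENNReal.ofReal_toReal (psiI_ne_top hnfin hy.1)]

lemma lintegral_Ioc_rpow {a r : ℝ} (ha : 0 < a) (hr : 0 < r) :
    ∫⁻ s in Ioc 0 a, ENNReal.ofReal (s ^ (r - 1)) = ENNReal.ofReal (a ^ r / r) := by
  have hi : IntervalIntegrable (fun s : ℝ => s ^ (r - 1)) volume 0 a :=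
    intervalIntegral.intervalIntegrable_rpow' (by linarith)
  rw [← ofReal_integral_eq_lintegral_ofReal
    ((intervalIntegrable_iff_integrableOn_Ioc_of_le ha.le).1 hi)
    ((ae_restrict_iff' measurableSet_Ioc).2 (Eventually.of_forall fun s hs =>
      Real.rpow_nonneg hs.1.le _)),
    ← intervalIntegral.integral_of_le ha.le, integral_rpow (Or.inl (by linarith))]
  simp [Real.zero_rpow hr.ne']

lemma lintegral_Ioi_rpow {a r : ℝ} (ha : 0 < a) (hr : r < 1) :
    ∫⁻ s in Ioi a, ENNReal.ofReal (s ^ (r - 2)) =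
      ENNReal.ofReal (a ^ (r - 1) / (1 - r)) := by
  rw [← ofReal_integral_eq_lintegral_ofReal
    (integrableOn_Ioi_rpow_of_lt (by linarith) ha)
    ((ae_restrict_iff' measurableSet_Ioi).2 (Eventually.of_forall fun s hs =>
      Real.rpow_nonneg (ha.trans hs).le _)),
    integral_Ioi_rpow_of_lt (by linarith) ha]
  congr 1
  rw [show r - 2 + 1 = r - 1 by ring, show r - 1 = -(1 - r) by ring, neg_div_neg_eq]

/-- Lemma 3.8: if `m, n ≥ 0` are measurable, locally integrable on `[0,D)`, with
`∫_0^D n < ∞` and `c = sup_x (∫_0^x m)(∫_x^D n) < ∞`, then for every `r ∈ (0,1)`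
and `x ∈ (0,D)` one has `∫_0^x m ψ^r ≤ (c/(1-r)) ψ(x)^{r-1}`
(with the conventions of `ℝ≥0∞`, in particular `0^{r-1} = ∞`). -/
theorem weighted_tail_inequality
    (D : ℝ≥0∞) (hD : 0 < D) (m n : ℝ → ℝ)
    (hm : Measurable m) (hn : Measurable n)
    (hm0 : ∀ y, 0 ≤ m y) (hn0 : ∀ y, 0 ≤ n y)
    (hmloc : ∀ p : ℝ, 0 ≤ p → ENNReal.ofReal p < D → IntegrableOn m (Set.Icc 0 p))
    (hnloc : ∀ p : ℝ, 0 ≤ p → ENNReal.ofReal p < D → IntegrableOn n (Set.Icc 0 p))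
    (hnfin : (∫⁻ y in ooI D, ENNReal.ofReal (n y)) < ∞)
    (hc : cI D m n < ∞)
    (r : ℝ) (hr : r ∈ Set.Ioo (0 : ℝ) 1) (x : ℝ) (hx : x ∈ ooI D) :
    (∫⁻ y in Set.Ioo 0 x, ENNReal.ofReal (m y) * psiI D n y ^ r) ≤
      cI D m n / ENNReal.ofReal (1 - r) * psiI D n x ^ (r - 1) := by
  obtain ⟨hr0, hr1⟩ := hr
  rw [lintegral_eq_layer hm hnfin hr0 x]
  have hlev : ∀ s : ℝ, 0 < s →
      muI m x {y | s < (psiI D n y).toReal} ≤ cI D m n / ENNReal.ofReal s :=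
    fun s hs => measure_level_le hnfin hx hs
  by_cases hψ : psiI D n x = 0
  · by_cases hc0 : cI D m n = 0
    · have hz : ∫⁻ s in Ioi (0 : ℝ), muI m x {y | s < (psiI D n y).toReal} *
          ENNReal.ofReal (s ^ (r - 1)) = 0 := by
        rw [setLIntegral_congr_fun (g := fun _ => 0) measurableSet_Ioi]
        · simp
        · intro s hs
          have h := hlev s hs
          rw [hc0, ENNReal.zero_div, nonpos_iff_eq_zero] at h
          simp only [h, zero_mul]
      simp [hz]
    · rw [hψ, ENNReal.zero_rpow_of_neg (by linarith), ENNReal.mul_top]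
      · exact le_top
      · exact (ENNReal.div_pos hc0 ofReal_ne_top).ne'
  have hψt : psiI D n x ≠ ∞ := psiI_ne_top hnfin hx.1
  obtain ⟨a, ha, hψa⟩ : ∃ a : ℝ, 0 < a ∧ psiI D n x = ENNReal.ofReal a :=
    ⟨_, ENNReal.toReal_pos hψ hψt, (ENNReal.ofReal_toReal hψt).symm⟩
  obtain ⟨C, hC, hcC⟩ : ∃ C : ℝ, 0 ≤ C ∧ cI D m n = ENNReal.ofReal C :=
    ⟨_, toReal_nonneg, (ENNReal.ofReal_toReal hc.ne).symm⟩
  have htot : ∀ s : ℝ, muI m x {y | s < (psiI D n y).toReal} ≤ ENNReal.ofReal (C / a) := by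
    intro s
    rw [ENNReal.ofReal_div_of_pos ha, ← hcC, ← hψa,
      ENNReal.le_div_iff_mul_le (Or.inl hψ) (Or.inl hψt)]
    refine le_trans ?_ (mass_mul_psiI_le hx)
    gcongr
    refine (measure_mono (subset_univ _)).trans ?_
    rw [muI, withDensity_apply _ MeasurableSet.univ, Measure.restrict_univ]
  have hI1 : ∫⁻ s in Ioc 0 a, muI m x {y | s < (psiI D n y).toReal} *
      ENNReal.ofReal (s ^ (r - 1)) ≤ ENNReal.ofReal (C / a * (a ^ r / r)) := by
    rw [ENNReal.ofReal_mul (by positivity), ← lintegral_Ioc_rpow ha hr0,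
      ← lintegral_const_mul' _ _ ofReal_ne_top]
    exact lintegral_mono fun s => mul_le_mul_left (htot s) _
  have hI2 : ∫⁻ s in Ioi a, muI m x {y | s < (psiI D n y).toReal} *
      ENNReal.ofReal (s ^ (r - 1)) ≤ ENNReal.ofReal (C * (a ^ (r - 1) / (1 - r))) := by
    rw [ENNReal.ofReal_mul hC, ← lintegral_Ioi_rpow ha hr1,
      ← lintegral_const_mul' _ _ ofReal_ne_top]
    refine setLIntegral_mono' measurableSet_Ioi fun s hs => ?_
    have hs0 : 0 < s := ha.trans hs
    calc _ ≤ ENNReal.ofReal (C / s) * ENNReal.ofReal (s ^ (r - 1)) := by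
          gcongr
          rw [ENNReal.ofReal_div_of_pos hs0, ← hcC]
          exact hlev s hs0
      _ = _ := by
          rw [← ENNReal.ofReal_mul (by positivity), ← ENNReal.ofReal_mul hC]
          congr 1
          rw [show r - 2 = r - 1 - 1 by ring, Real.rpow_sub_one hs0.ne' (r - 1)]
          ring
  -- The two bounds on the level sets cross at `s = a = ψ(x)`.
  rw [← Ioc_union_Ioi_eq_Ioi ha.le, lintegral_union measurableSet_Ioi Ioc_disjoint_Ioi_same]
  have h1r : 0 < 1 - r := by linarith
  calc _ ≤ ENNReal.ofReal r * (ENNReal.ofReal (C / a * (a ^ r / r)) +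
        ENNReal.ofReal (C * (a ^ (r - 1) / (1 - r)))) := by gcongr
    _ = _ := by
      rw [hcC, hψa, ENNReal.ofReal_rpow_of_pos ha, ← ENNReal.ofReal_div_of_pos h1r,
        ← ENNReal.ofReal_mul (by positivity), ← ENNReal.ofReal_add (by positivity) (by positivity),
        ← ENNReal.ofReal_mul hr0.le]
      congr 1
      rw [Real.rpow_sub_one ha.ne']
      field_simp
      ring
end
end
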